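/- arXiv:2512.08364 — 9 statements merged into one kernel-verified Lean document; each statement's English description precedes it below -/
import Mathlib

section
/- Let d, N ∈ ℕ and let ρ_d be a probability density on [0,1]^d (measurable, nonnegative, ∫_{[0,1]^d} ρ_d = 1, ρ_d > 0 almost everywhere) such that C := ∫_{[0,1]^d} (∏_{j=1}^d (1−t_j))/ρ_d(t) dt < ∞. If t_1,…,t_N are i.i.d. random points in [0,1]^d with law ρ_d(t)dt and the weights are a_k = 1/(N ρ_d(t_k)), then E[∫_{[0,1]^d} Δ(x)² dx] = (C − 3^{−d})/N. -/
open MeasureTheory ProbabilityTheory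

namespace DiscAux

lemma restrict_cube (d : ℕ) :
    (volume : Measure (Fin d → ℝ)).restrict (Set.Icc (0 : Fin d → ℝ) 1)
      = Measure.pi (fun _ : Fin d => (volume : Measure ℝ).restrict (Set.Icc 0 1)) := by
  rw [← Measure.restrict_pi_pi, ← Set.pi_univ_Icc]; rfl

lemma restrict_cube2 (N d : ℕ) :
    (volume : Measure (Fin N → Fin d → ℝ)).restrict (Set.Icc (0 : Fin N → Fin d → ℝ) 1)
      = Measure.pi (fun _ : Fin N =>
          (volume : Measure (Fin d → ℝ)).restrict (Set.Icc (0 : Fin d → ℝ) 1)) := by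
  rw [← Measure.restrict_pi_pi, ← Set.pi_univ_Icc]; rfl

lemma ind_prod {d : ℕ} (t x : Fin d → ℝ) :
    (if ∀ j, t j < x j then (1 : ℝ) else 0) = ∏ j, (if t j < x j then (1 : ℝ) else 0) := by
  by_cases h : ∀ j, t j < x j
  · simp [h]
  · rw [if_neg h]
    push Not at h
    obtain ⟨j, hj⟩ := h
    exact (Finset.prod_eq_zero (Finset.mem_univ j) (by simp [hj])).symm

lemma one_dim_left (x : ℝ) (hx : x ∈ Set.Icc (0 : ℝ) 1) :
    ∫ t in Set.Icc (0 : ℝ) 1, (if t < x then (1 : ℝ) else 0) = x := by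
  have : (fun t : ℝ => if t < x then (1 : ℝ) else 0) = (Set.Iio x).indicator (fun _ => 1) := by
    ext t; simp [Set.indicator]
  rw [this, setIntegral_indicator measurableSet_Iio]
  have : Set.Icc (0 : ℝ) 1 ∩ Set.Iio x = Set.Ico 0 x := by
    ext t; simp only [Set.mem_inter_iff, Set.mem_Icc, Set.mem_Iio, Set.mem_Ico]
    constructor
    · rintro ⟨⟨a, b⟩, c⟩; exact ⟨a, c⟩
    · rintro ⟨a, c⟩; exact ⟨⟨a, by linarith [hx.2]⟩, c⟩
  rw [this]; simp [hx.1]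

lemma one_dim_right (t : ℝ) (ht : t ∈ Set.Icc (0 : ℝ) 1) :
    ∫ x in Set.Icc (0 : ℝ) 1, (if t < x then (1 : ℝ) else 0) = 1 - t := by
  have : (fun x : ℝ => if t < x then (1 : ℝ) else 0) = (Set.Ioi t).indicator (fun _ => 1) := by
    ext t; simp [Set.indicator]
  rw [this, setIntegral_indicator measurableSet_Ioi]
  have : Set.Icc (0 : ℝ) 1 ∩ Set.Ioi t = Set.Ioc t 1 := by
    ext x; simp only [Set.mem_inter_iff, Set.mem_Icc, Set.mem_Ioi, Set.mem_Ioc]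
    constructor
    · rintro ⟨⟨a, b⟩, c⟩; exact ⟨c, b⟩
    · rintro ⟨a, c⟩; exact ⟨⟨by linarith [ht.1], c⟩, a⟩
  rw [this]; simp [ht.2]

lemma cube_left {d : ℕ} (x : Fin d → ℝ) (hx : x ∈ Set.Icc (0 : Fin d → ℝ) 1) :
    ∫ t in Set.Icc (0 : Fin d → ℝ) 1, (if ∀ j, t j < x j then (1 : ℝ) else 0) = ∏ j, x j := by
  simp_rw [ind_prod]
  rw [restrict_cube,
    integral_fintype_prod_eq_prod (fun j (s : ℝ) => if s < x j then (1 : ℝ) else 0)]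
  exact Finset.prod_congr rfl fun j _ => one_dim_left _ ⟨hx.1 j, hx.2 j⟩

lemma cube_right {d : ℕ} (t : Fin d → ℝ) (ht : t ∈ Set.Icc (0 : Fin d → ℝ) 1) :
    ∫ x in Set.Icc (0 : Fin d → ℝ) 1, (if ∀ j, t j < x j then (1 : ℝ) else 0)
      = ∏ j, (1 - t j) := by
  simp_rw [ind_prod]
  rw [restrict_cube,
    integral_fintype_prod_eq_prod (fun j (s : ℝ) => if t j < s then (1 : ℝ) else 0)]
  exact Finset.prod_congr rfl fun j _ => one_dim_right _ ⟨ht.1 j, ht.2 j⟩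

lemma cube_sq (d : ℕ) :
    ∫ x in Set.Icc (0 : Fin d → ℝ) 1, (∏ j, x j) ^ 2 = (3 : ℝ) ^ (-(d : ℤ)) := by
  simp_rw [← Finset.prod_pow]
  rw [restrict_cube, integral_fintype_prod_eq_pow (fun s : ℝ => s ^ 2),
    integral_Icc_eq_integral_Ioc, ← intervalIntegral.integral_of_le (by norm_num), integral_pow]
  simp [zpow_neg]
  norm_num

lemma meas_ind {d : ℕ} : Measurable (fun p : (Fin d → ℝ) × (Fin d → ℝ) =>
    (if ∀ j, p.1 j < p.2 j then (1 : ℝ) else 0)) := by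
  refine Measurable.ite ?_ measurable_const measurable_const
  have : {a : (Fin d → ℝ) × (Fin d → ℝ) | ∀ j, a.1 j < a.2 j} = ⋂ j, {a | a.1 j < a.2 j} := by
    ext; simp
  rw [this]
  exact MeasurableSet.iInter fun j => measurableSet_lt (by fun_prop) (by fun_prop)

instance cube_prob (d : ℕ) : IsProbabilityMeasure
    ((volume : Measure (Fin d → ℝ)).restrict (Set.Icc (0 : Fin d → ℝ) 1)) := by
  constructor
  simp [Real.volume_Icc_pi]

lemma pi_withDens {N : ℕ} {Ω : Type*} [MeasurableSpace Ω] (μ : Measure Ω) [SigmaFinite μ]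
    (ρ : Ω → ℝ) (h0 : ∀ t, 0 ≤ ρ t) (hi : Integrable ρ μ)
    [SigmaFinite (μ.withDensity fun t => ENNReal.ofReal (ρ t))] :
    Measure.pi (fun _ : Fin N => μ.withDensity fun t => ENNReal.ofReal (ρ t))
      = (Measure.pi (fun _ : Fin N => μ)).withDensity
          (fun T => ENNReal.ofReal (∏ k, ρ (T k))) := by
  refine Measure.pi_eq fun s hs => ?_
  rw [withDensity_apply _ (MeasurableSet.univ_pi hs), Measure.restrict_pi_pi,
    ← ofReal_integral_eq_lintegral_ofReal]
  · rw [integral_fintype_prod_eq_prod (fun _ => ρ), ENNReal.ofReal_prod_of_nonneg]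
    · refine Finset.prod_congr rfl fun i _ => ?_
      rw [withDensity_apply _ (hs i), ← ofReal_integral_eq_lintegral_ofReal]
      · exact hi.integrableOn
      · exact Filter.Eventually.of_forall h0
    · intro i _
      exact integral_nonneg h0
  · exact Integrable.fintype_prod (f := fun _ => ρ) fun i => hi.integrableOn
  · exact Filter.Eventually.of_forall fun T => Finset.prod_nonneg fun k _ => h0 _

/-- integrability of the kernel and its integral -/
lemma kernel {d : ℕ} (ρd : (Fin d → ℝ) → ℝ) (hmeas : Measurable ρd)
    (hnonneg : ∀ t, 0 ≤ ρd t)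
    (hint : IntegrableOn (fun t : Fin d → ℝ => (∏ j, (1 - t j)) / ρd t)
      (Set.Icc (0 : Fin d → ℝ) 1)) :
    Integrable (fun p : (Fin d → ℝ) × (Fin d → ℝ) =>
      (if ∀ j, p.1 j < p.2 j then (1 : ℝ) else 0) / ρd p.1)
      ((volume.restrict (Set.Icc (0 : Fin d → ℝ) 1)).prod
        (volume.restrict (Set.Icc (0 : Fin d → ℝ) 1))) := by
  have hm : Measurable (fun p : (Fin d → ℝ) × (Fin d → ℝ) =>
      (if ∀ j, p.1 j < p.2 j then (1 : ℝ) else 0) / ρd p.1) :=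
    meas_ind.div (hmeas.comp measurable_fst)
  rw [integrable_prod_iff hm.aestronglyMeasurable]
  constructor
  · refine Filter.Eventually.of_forall fun t => ?_
    have hb : Integrable (fun x : Fin d → ℝ => if ∀ j, t j < x j then (1 : ℝ) else 0)
        (volume.restrict (Set.Icc (0 : Fin d → ℝ) 1)) := by
      refine Integrable.of_bound
        (meas_ind.comp (measurable_prodMk_left (x := t))).aestronglyMeasurable 1
        (Filter.Eventually.of_forall fun x => ?_)
      split_ifs <;> simp
    exact hb.div_const (ρd t)
  · refine Integrable.congr hint ?_
    refine (ae_restrict_mem measurableSet_Icc).mono fun t ht => ?_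
    simp only
    rw [← cube_right t ht, ← integral_div]
    refine integral_congr_ae (Filter.Eventually.of_forall fun x => ?_)
    simp only
    rw [Real.norm_of_nonneg]
    exact div_nonneg (by split_ifs <;> simp) (hnonneg t)

/-- The mean squared error at a fixed `x`. -/
lemma fixed_x {d N : ℕ} (hN : 0 < N) (ρd : (Fin d → ℝ) → ℝ) (hmeas : Measurable ρd)
    (hnonneg : ∀ t, 0 ≤ ρd t) (μ P : Measure (Fin d → ℝ))
    (hμ : μ = volume.restrict (Set.Icc (0 : Fin d → ℝ) 1))
    (hP : P = μ.withDensity fun t => ENNReal.ofReal (ρd t)) [IsProbabilityMeasure P]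
    (hpos : ∀ᵐ t ∂μ, 0 < ρd t)
    (x : Fin d → ℝ) (hx : x ∈ Set.Icc (0 : Fin d → ℝ) 1)
    (hq : Integrable (fun t => (if ∀ j, t j < x j then (1 : ℝ) else 0) / ρd t) μ) :
    Integrable (fun T : Fin N → Fin d → ℝ => ((∑ k, (1 / (N * ρd (T k))) *
                (if ∀ j, T k j < x j then (1 : ℝ) else 0)) - ∏ j, x j) ^ 2)
        (Measure.pi fun _ => P) ∧
    ∫ T : Fin N → Fin d → ℝ, ((∑ k, (1 / (N * ρd (T k))) *
                (if ∀ j, T k j < x j then (1 : ℝ) else 0)) - ∏ j, x j) ^ 2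
        ∂(Measure.pi fun _ => P)
      = ((∫ t, (if ∀ j, t j < x j then (1 : ℝ) else 0) / ρd t ∂μ) - (∏ j, x j) ^ 2) / N := by
  have hN' : (N : ℝ) ≠ 0 := by positivity
  set Y : (Fin d → ℝ) → ℝ := fun t =>
    (1 / (N * ρd t)) * (if ∀ j, t j < x j then (1 : ℝ) else 0) with hY
  have hYm : Measurable Y :=
    (measurable_const.div (measurable_const.mul hmeas)).mul (meas_ind.comp measurable_prodMk_right)
  have hdm : Measurable fun t => ENNReal.ofReal (ρd t) := hmeas.ennreal_ofReal
  have hint (g : (Fin d → ℝ) → ℝ) : ∫ t, g t ∂P = ∫ t, ρd t * g t ∂μ := by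
    rw [hP, integral_withDensity_eq_integral_toReal_smul hdm (by simp)]
    simp [ENNReal.toReal_ofReal, hnonneg]
  have hsq : (fun t => ρd t * (Y t) ^ 2)
      = fun t => ((if ∀ j, t j < x j then (1 : ℝ) else 0) / ρd t) / (N : ℝ) ^ 2 := by
    ext t
    simp only [hY]
    by_cases h0 : ρd t = 0
    · simp [h0]
    · split_ifs
      · field_simp
      · simp
  have hYL : MemLp Y 2 P := by
    rw [memLp_two_iff_integrable_sq hYm.aestronglyMeasurable, hP,
      integrable_withDensity_iff_integrable_smul' hdm (by simp)]
    simp only [ENNReal.toReal_ofReal, hnonneg, smul_eq_mul]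
    rw [hsq]
    exact hq.div_const _
  have hE : ∫ t, Y t ∂P = (∏ j, x j) / N := by
    rw [hint, ← cube_left x hx, ← hμ, ← integral_div]
    refine integral_congr_ae (hpos.mono fun t ht => ?_)
    simp only [hY]
    field_simp
  have hE2 : ∫ t, (Y t) ^ 2 ∂P
      = (∫ t, (if ∀ j, t j < x j then (1 : ℝ) else 0) / ρd t ∂μ) / (N : ℝ) ^ 2 := by
    rw [hint, hsq, integral_div]
  have hV := variance_sum_pi (μ := fun _ : Fin N => P) (X := fun _ => Y) (fun _ => hYL)
  have hcomp : ∀ k : Fin N, MemLp (fun T : Fin N → Fin d → ℝ => Y (T k)) 2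
      (Measure.pi fun _ => P) := fun k =>
    hYL.comp_measurePreserving (measurePreserving_eval (fun _ => P) k)
  have hSL : MemLp (fun T : Fin N → Fin d → ℝ => ∑ k, Y (T k)) 2 (Measure.pi fun _ => P) :=
    memLp_finsetSum _ fun k _ => hcomp k
  have hSE : ∫ T : Fin N → Fin d → ℝ, ∑ k, Y (T k) ∂(Measure.pi fun _ => P) = ∏ j, x j := by
    rw [integral_finsetSum _ fun k _ => (hcomp k).integrable (by norm_num)]
    have : ∀ k : Fin N, ∫ T : Fin N → Fin d → ℝ, Y (T k) ∂(Measure.pi fun _ => P)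
        = (∏ j, x j) / N := fun k => by
      rw [integral_comp_eval (μ := fun _ : Fin N => P) (f := Y) hYm.aestronglyMeasurable, hE]
    simp_rw [this]
    simp
    field_simp
  refine ⟨(hSL.sub (memLp_const _)).integrable_sq, ?_⟩
  have hfun : (∑ k : Fin N, fun T : Fin N → Fin d → ℝ => Y (T k)) = fun T => ∑ k, Y (T k) := by
    ext T; simp
  rw [hfun, variance_eq_integral hSL.aestronglyMeasurable.aemeasurable, hSE] at hV
  refine hV.trans ?_
  rw [variance_eq_sub hYL]
  simp only [Pi.pow_apply]
  rw [hE, hE2]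
  simp
  field_simp

end DiscAux

open DiscAux in
/-- For i.i.d. points `t₁,…,t_N` in `[0,1]^d` with density `ρd` and
weights `a_k = 1/(N ρd(t_k))`, the expected squared `L₂`-discrepancy equals
`(C - 3^{-d})/N`, where `C = ∫ (∏_j (1 - t_j))/ρd(t) dt`. -/
theorem expected_squared_discrepancy_density
    (d N : ℕ) (hN : 0 < N)
    (ρd : (Fin d → ℝ) → ℝ)
    (hmeas : Measurable ρd)
    (hnonneg : ∀ t, 0 ≤ ρd t)
    (hprob : ∫ t in Set.Icc (0 : Fin d → ℝ) 1, ρd t = 1)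
    (hpos : ∀ᵐ t ∂(volume.restrict (Set.Icc (0 : Fin d → ℝ) 1)), 0 < ρd t)
    (hint : IntegrableOn (fun t : Fin d → ℝ => (∏ j, (1 - t j)) / ρd t)
      (Set.Icc (0 : Fin d → ℝ) 1))
    (C : ℝ)
    (hC : C = ∫ t in Set.Icc (0 : Fin d → ℝ) 1, (∏ j, (1 - t j)) / ρd t) :
    (∫ T in Set.Icc (0 : Fin N → Fin d → ℝ) 1,
        (∏ k, ρd (T k)) *
          ∫ x in Set.Icc (0 : Fin d → ℝ) 1,
            ((∑ k, (1 / (N * ρd (T k))) *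
                (if ∀ j, T k j < x j then (1 : ℝ) else 0)) - ∏ j, x j) ^ 2)
      = (C - (3 : ℝ) ^ (-(d : ℤ))) / N := by
  have hker := kernel ρd hmeas hnonneg hint
  have hmem := ae_restrict_mem (μ := (volume : Measure (Fin d → ℝ)))
    (measurableSet_Icc (a := (0 : Fin d → ℝ)) (b := 1))
  have hsqint : Integrable (fun x : Fin d → ℝ => (∏ j, x j) ^ 2)
      (volume.restrict (Set.Icc (0 : Fin d → ℝ) 1)) := by
    refine Continuous.integrableOn_Icc ?_
    fun_prop
  have hsq := cube_sq d
  have hCq : C = ∫ x in Set.Icc (0 : Fin d → ℝ) 1, ∫ t in Set.Icc (0 : Fin d → ℝ) 1,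
      (if ∀ j, t j < x j then (1 : ℝ) else 0) / ρd t := by
    rw [← integral_integral_swap (f := fun (t x : Fin d → ℝ) =>
      (if ∀ j, t j < x j then (1 : ℝ) else 0) / ρd t) hker, hC]
    refine integral_congr_ae (hmem.mono fun t ht => ?_)
    simp only
    rw [← cube_right t ht, ← integral_div]
  have hρi : Integrable ρd (volume.restrict (Set.Icc (0 : Fin d → ℝ) 1)) := by
    by_contra h
    rw [integral_undef h] at hprob
    norm_num at hprob
  rw [restrict_cube2]
  set μ := (volume : Measure (Fin d → ℝ)).restrict (Set.Icc (0 : Fin d → ℝ) 1) with hμ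
  obtain ⟨P, hP⟩ : ∃ P, P = μ.withDensity fun t => ENNReal.ofReal (ρd t) := ⟨_, rfl⟩
  have hPp : IsProbabilityMeasure P := by
    constructor
    rw [hP, withDensity_apply _ MeasurableSet.univ, Measure.restrict_univ,
      ← ofReal_integral_eq_lintegral_ofReal hρi (Filter.Eventually.of_forall hnonneg), hprob]
    simp
  have hpi : Measure.pi (fun _ : Fin N => P) = (Measure.pi (fun _ : Fin N => μ)).withDensity
          (fun T => ENNReal.ofReal (∏ k, ρd (T k))) := by
    subst hP
    exact pi_withDens μ ρd hnonneg hρi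
  set D : (Fin N → Fin d → ℝ) → (Fin d → ℝ) → ℝ := fun T x =>
    ((∑ k, (1 / (N * ρd (T k))) *
                (if ∀ j, T k j < x j then (1 : ℝ) else 0)) - ∏ j, x j) ^ 2 with hD
  have hL : ∫ T, (∏ k, ρd (T k)) * ∫ x, D T x ∂μ ∂(Measure.pi (fun _ : Fin N => μ))
      = ∫ T, ∫ x, D T x ∂μ ∂(Measure.pi (fun _ : Fin N => P)) := by
    rw [hpi, integral_withDensity_eq_integral_toReal_smul]
    · refine integral_congr_ae (Filter.Eventually.of_forall fun T => ?_)
      simp only [smul_eq_mul]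
      rw [ENNReal.toReal_ofReal (Finset.prod_nonneg fun k _ => hnonneg _)]
    · refine Measurable.ennreal_ofReal ?_
      exact Finset.measurable_prod _ fun k _ => hmeas.comp (measurable_pi_apply k)
    · simp
  change ∫ T, (∏ k, ρd (T k)) * ∫ x, D T x ∂μ ∂(Measure.pi (fun _ : Fin N => μ)) = _
  rw [hL]
  have hfix : ∀ᵐ x ∂μ, Integrable (fun T => D T x) (Measure.pi fun _ => P) ∧
      ∫ T, D T x ∂(Measure.pi fun _ => P)
      = ((∫ t, (if ∀ j, t j < x j then (1 : ℝ) else 0) / ρd t ∂μ) - (∏ j, x j) ^ 2) / N := by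
    filter_upwards [hmem, hker.prod_left_ae] with x hx hq
    exact fixed_x hN ρd hmeas hnonneg μ P hμ hP hpos x hx hq
  have hDm : Measurable (Function.uncurry D) := by
    refine Measurable.pow_const (Measurable.sub ?_ (by fun_prop)) 2
    refine Finset.measurable_sum _ fun k _ => Measurable.mul ?_ ?_
    · exact measurable_const.div (measurable_const.mul
        (hmeas.comp ((measurable_pi_apply k).comp measurable_fst)))
    · have hpr : Measurable (fun p : (Fin N → Fin d → ℝ) × (Fin d → ℝ) => (p.1 k, p.2)) :=
        ((measurable_pi_apply k).comp measurable_fst).prodMk measurable_snd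
      exact meas_ind.comp hpr
  have hqi := hker.integral_prod_right
  have hDi : Integrable (Function.uncurry D) ((Measure.pi fun _ => P).prod μ) := by
    rw [integrable_prod_iff' hDm.aestronglyMeasurable]
    refine ⟨hfix.mono fun x hx => hx.1, ?_⟩
    refine ((hqi.sub hsqint).div_const (N : ℝ)).congr ?_
    filter_upwards [hfix] with x hx
    refine hx.2.symm.trans (integral_congr_ae (Filter.Eventually.of_forall fun T => ?_))
    simp only [Function.uncurry]
    rw [Real.norm_of_nonneg (sq_nonneg _)]
  rw [integral_integral_swap hDi, integral_congr_ae (hfix.mono fun x hx => hx.2), integral_div,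
    integral_sub hqi hsqint, ← hCq, hsq]
end

section
/- Let d, N ∈ ℕ and let ρ_d be a probability density on [0,1]^d (measurable, nonnegative, ∫_{[0,1]^d} ρ_d = 1, ρ_d > 0 almost everywhere) such that C := ∫_{[0,1]^d} (∏_{j=1}^d (1−t_j))/ρ_d(t) dt < ∞. Then there exist deterministic points t_1,…,t_N ∈ [0,1]^d with ρ_d(t_k) > 0 for all k such that, with weights a_k = 1/(N ρ_d(t_k)), one has ∫_{[0,1]^d} Δ(x)² dx ≤ (C − 3^{−d})/N. -/
open MeasureTheory

namespace DiscAux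

noncomputable def ind {d : ℕ} (t x : Fin d → ℝ) : ℝ := if ∀ j, t j < x j then (1 : ℝ) else 0

lemma ind_nonneg {d : ℕ} (t x : Fin d → ℝ) : 0 ≤ ind t x := by
  unfold ind; split_ifs <;> norm_num

lemma ind_le {d : ℕ} (t x : Fin d → ℝ) : ind t x ≤ 1 := by
  unfold ind; split_ifs <;> norm_num

lemma ind_sq {d : ℕ} (t x : Fin d → ℝ) : ind t x ^ 2 = ind t x := by
  unfold ind; split_ifs <;> norm_num

lemma ind_meas {d : ℕ} : Measurable (fun p : (Fin d → ℝ) × (Fin d → ℝ) => ind p.1 p.2) := by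
  unfold ind
  refine Measurable.ite ?_ measurable_const measurable_const
  rw [Set.ofPred_forall]
  exact MeasurableSet.iInter fun j => measurableSet_lt (by fun_prop) (by fun_prop)

lemma ind_meas_left {d : ℕ} (t : Fin d → ℝ) : Measurable (fun x => ind t x) :=
  ind_meas.comp (measurable_const.prodMk measurable_id)

lemma ind_meas_right {d : ℕ} (x : Fin d → ℝ) : Measurable (fun t => ind t x) :=
  ind_meas.comp (measurable_id.prodMk measurable_const)

noncomputable abbrev mu (d : ℕ) : Measure (Fin d → ℝ) :=
  volume.restrict (Set.Icc (0 : Fin d → ℝ) 1)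

lemma vol_cube (d : ℕ) : (volume (Set.Icc (0 : Fin d → ℝ) 1)) = 1 := by
  rw [Real.volume_Icc_pi]; simp

instance (d : ℕ) : IsProbabilityMeasure (mu d) := ⟨by simp [vol_cube]⟩

lemma int_ind_x {d : ℕ} (t : Fin d → ℝ) (ht : t ∈ Set.Icc (0 : Fin d → ℝ) 1) :
    ∫ x, ind t x ∂(mu d) = ∏ j, (1 - t j) := by
  have h1 : ∀ x, ind t x = Set.indicator {x | ∀ j, t j < x j} (fun _ => (1 : ℝ)) x := by
    intro x; simp [ind, Set.indicator]
  have hm : MeasurableSet {x : Fin d → ℝ | ∀ j, t j < x j} := by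
    rw [Set.ofPred_forall]
    exact MeasurableSet.iInter fun j => measurableSet_lt (by fun_prop) (by fun_prop)
  simp_rw [h1]
  rw [integral_indicator hm, setIntegral_const, measureReal_restrict_apply hm]
  have : {x : Fin d → ℝ | ∀ j, t j < x j} ∩ Set.Icc 0 1
      = Set.univ.pi (fun j => Set.Ioc (t j) ((1 : Fin d → ℝ) j)) := by
    ext x
    simp only [Set.mem_inter_iff, Set.mem_ofPred_eq, Set.mem_Icc, Pi.le_def, Set.mem_pi,
      Set.mem_univ, forall_true_left, Set.mem_Ioc, Pi.zero_apply, Pi.one_apply]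
    constructor
    · rintro ⟨a, b, c⟩ j; exact ⟨a j, c j⟩
    · intro h; exact ⟨fun j => (h j).1, fun j => (ht.1 j).trans (h j).1.le, fun j => (h j).2⟩
  rw [this, measureReal_def, Real.volume_pi_Ioc_toReal (fun j => ht.2 j)]
  simp

lemma int_ind_t {d : ℕ} (x : Fin d → ℝ) (hx : x ∈ Set.Icc (0 : Fin d → ℝ) 1) :
    ∫ t, ind t x ∂(mu d) = ∏ j, x j := by
  have h1 : ∀ t, ind t x = Set.indicator {t | ∀ j, t j < x j} (fun _ => (1 : ℝ)) t := by
    intro t; simp [ind, Set.indicator]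
  have hm : MeasurableSet {t : Fin d → ℝ | ∀ j, t j < x j} := by
    rw [Set.ofPred_forall]
    exact MeasurableSet.iInter fun j => measurableSet_lt (by fun_prop) (by fun_prop)
  simp_rw [h1]
  rw [integral_indicator hm, setIntegral_const, measureReal_restrict_apply hm]
  have : {t : Fin d → ℝ | ∀ j, t j < x j} ∩ Set.Icc 0 1
      = Set.univ.pi (fun j => Set.Ico ((0 : Fin d → ℝ) j) (x j)) := by
    ext t
    simp only [Set.mem_inter_iff, Set.mem_ofPred_eq, Set.mem_Icc, Pi.le_def, Set.mem_pi,
      Set.mem_univ, forall_true_left, Set.mem_Ico, Pi.zero_apply, Pi.one_apply]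
    constructor
    · rintro ⟨a, b, c⟩ j; exact ⟨b j, a j⟩
    · intro h; exact ⟨fun j => (h j).2, fun j => (h j).1, fun j => (h j).2.le.trans (hx.2 j)⟩
  rw [this, measureReal_def, Real.volume_pi_Ico_toReal (fun j => hx.1 j)]
  simp

lemma int_m_sq (d : ℕ) : ∫ x, (∏ j, x j) ^ 2 ∂(mu d) = (3 : ℝ) ^ (-(d : ℤ)) := by
  have h : mu d = Measure.pi (fun _ : Fin d => (volume : Measure ℝ).restrict (Set.Icc 0 1)) := by
    rw [mu, ← Measure.restrict_pi_pi, ← Set.pi_univ_Icc, volume_pi]; rfl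
  rw [h]
  simp_rw [← Finset.prod_pow]
  rw [integral_fintype_prod_eq_prod (𝕜 := ℝ) (f := fun (_ : Fin d) (y : ℝ) => y ^ 2)]
  have : ∫ y in Set.Icc (0 : ℝ) 1, y ^ 2 = 1 / 3 := by
    rw [integral_Icc_eq_integral_Ioc, ← intervalIntegral.integral_of_le zero_le_one, integral_pow]
    norm_num
  simp [this]

lemma m_bound {d : ℕ} (x : Fin d → ℝ) (hx : x ∈ Set.Icc (0 : Fin d → ℝ) 1) :
    |∏ j, x j| ≤ 1 := by
  rw [Finset.abs_prod]
  exact Finset.prod_le_one (fun _ _ => abs_nonneg _)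
    (fun j _ => by rw [abs_of_nonneg (hx.1 j)]; exact hx.2 j)

lemma integ_of_bound {d : ℕ} {f : (Fin d → ℝ) → ℝ} (hf : Measurable f) (B : ℝ)
    (hB : ∀ x ∈ Set.Icc (0 : Fin d → ℝ) 1, |f x| ≤ B) : Integrable f (mu d) :=
  Integrable.of_bound hf.aestronglyMeasurable B
    (ae_restrict_of_forall_mem measurableSet_Icc hB)

lemma add3 {d : ℕ} {f g h : (Fin d → ℝ) → ℝ} (hf : Integrable f (mu d))
    (hg : Integrable g (mu d)) (hh : Integrable h (mu d)) :
    ∫ x, (f x + g x + h x) ∂(mu d)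
      = ∫ x, f x ∂(mu d) + ∫ x, g x ∂(mu d) + ∫ x, h x ∂(mu d) := by
  have h1 : Integrable (fun x => f x + g x) (mu d) := hf.add hg
  rw [integral_add h1 hh, integral_add hf hg]

/-- Fubini step. -/
lemma fub {d : ℕ} {h : (Fin d → ℝ) → ℝ} (hh : Measurable h) (B : ℝ)
    (hB : ∀ x ∈ Set.Icc (0 : Fin d → ℝ) 1, |h x| ≤ B) :
    Integrable (fun t => ∫ x, h x * ind t x ∂(mu d)) (mu d) ∧
    ∫ t, ∫ x, h x * ind t x ∂(mu d) ∂(mu d) = ∫ x, h x * ∏ j, x j ∂(mu d) := by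
  have hI : Integrable (Function.uncurry fun t x => h x * ind t x) ((mu d).prod (mu d)) := by
    have h1 : Integrable (fun p : (Fin d → ℝ) × (Fin d → ℝ) => h p.2) ((mu d).prod (mu d)) :=
      (integ_of_bound hh B hB).comp_snd (mu d)
    refine h1.mul_bdd (c := 1) ind_meas.aestronglyMeasurable ?_
    refine Filter.Eventually.of_forall fun p => ?_
    rw [Real.norm_eq_abs, abs_of_nonneg (ind_nonneg _ _)]; exact ind_le _ _
  refine ⟨hI.integral_prod_left, ?_⟩
  rw [integral_integral_swap hI]
  refine setIntegral_congr_fun measurableSet_Icc fun x hx => ?_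
  rw [integral_const_mul, int_ind_t x hx]

lemma step {d : ℕ} (ρd : (Fin d → ℝ) → ℝ)
    (hprob : ∫ t, ρd t ∂(mu d) = 1)
    (hpos : ∀ᵐ t ∂(mu d), 0 < ρd t)
    (hint : Integrable (fun t : Fin d → ℝ => (∏ j, (1 - t j)) / ρd t) (mu d))
    (S : (Fin d → ℝ) → ℝ) (hS : Measurable S) (B : ℝ)
    (hB : ∀ x ∈ Set.Icc (0 : Fin d → ℝ) 1, |S x| ≤ B) :
    ∃ t ∈ Set.Icc (0 : Fin d → ℝ) 1, 0 < ρd t ∧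
      ∫ x, (S x + (1 / ρd t * ind t x - ∏ j, x j)) ^ 2 ∂(mu d) ≤
        ∫ x, S x ^ 2 ∂(mu d) +
          ((∫ t, (∏ j, (1 - t j)) / ρd t ∂(mu d)) - (3 : ℝ) ^ (-(d : ℤ))) := by
  have hρ : Integrable ρd (mu d) := by
    by_contra hc
    rw [integral_undef hc] at hprob
    exact zero_ne_one hprob
  set m : (Fin d → ℝ) → ℝ := fun x => ∏ j, x j with hm
  have mm : Measurable m := by fun_prop
  set D : (Fin d → ℝ) → ℝ := fun x => S x - m x with hD
  have hDm : Measurable D := hS.sub mm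
  have hDB : ∀ x ∈ Set.Icc (0 : Fin d → ℝ) 1, |D x| ≤ B + 1 := fun x hx =>
    (abs_sub _ _).trans (add_le_add (hB x hx) (m_bound x hx))
  have bmul : ∀ {a b A C : ℝ}, |a| ≤ A → |b| ≤ C → |a * b| ≤ A * C := by
    intro a b A C ha hb
    rw [abs_mul]
    exact mul_le_mul ha hb (abs_nonneg _) ((abs_nonneg _).trans ha)
  have indb : ∀ t x : Fin d → ℝ, |ind t x| ≤ 1 := fun t x => by
    rw [abs_of_nonneg (ind_nonneg _ _)]; exact ind_le _ _
  have iS2 : Integrable (fun x => S x ^ 2) (mu d) :=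
    integ_of_bound (hS.pow_const 2) (B * B) fun x hx => by
      rw [pow_two]; exact bmul (hB x hx) (hB x hx)
  have iD2 : Integrable (fun x => D x ^ 2) (mu d) :=
    integ_of_bound (hDm.pow_const 2) ((B+1) * (B+1)) fun x hx => by
      rw [pow_two]; exact bmul (hDB x hx) (hDB x hx)
  have im2 : Integrable (fun x => m x ^ 2) (mu d) :=
    integ_of_bound (mm.pow_const 2) (1 * 1) fun x hx => by
      rw [pow_two]; exact bmul (m_bound x hx) (m_bound x hx)
  have iDm : Integrable (fun x => D x * m x) (mu d) :=
    integ_of_bound (hDm.mul mm) ((B+1) * 1) fun x hx => bmul (hDB x hx) (m_bound x hx)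
  have iDi : ∀ t, Integrable (fun x => D x * ind t x) (mu d) := fun t =>
    integ_of_bound (hDm.mul (ind_meas_left t)) ((B+1) * 1) fun x hx => bmul (hDB x hx) (indb t x)
  have ii : ∀ t, Integrable (fun x => ind t x) (mu d) := fun t =>
    integ_of_bound (ind_meas_left t) 1 fun x _ => indb t x
  obtain ⟨iG, hG⟩ := fub hDm (B + 1) hDB
  set C := ∫ t, (∏ j, (1 - t j)) / ρd t ∂(mu d) with hC
  set K := ∫ x, S x ^ 2 ∂(mu d) + (C - (3 : ℝ) ^ (-(d : ℤ))) with hK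
  have hF : ∀ t ∈ Set.Icc (0 : Fin d → ℝ) 1,
      ∫ x, (S x + (1 / ρd t * ind t x - m x)) ^ 2 ∂(mu d) =
      ∫ x, D x ^ 2 ∂(mu d) + (2 * (1 / ρd t)) * ∫ x, D x * ind t x ∂(mu d)
        + (1 / ρd t) ^ 2 * ∏ j, (1 - t j) := by
    intro t ht
    rw [← int_ind_x t ht, ← integral_const_mul, ← integral_const_mul, 
      ← add3 iD2 ((iDi t).const_mul _) ((ii t).const_mul _)]
    congr 1
    ext x
    have := ind_sq t x
    simp only [hD]
    linear_combination (1 / ρd t) ^ 2 * this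
  have hKid : ∫ x, D x ^ 2 ∂(mu d) + 2 * ∫ x, D x * m x ∂(mu d) + C = K := by
    have : ∫ x, D x ^ 2 ∂(mu d) + 2 * ∫ x, D x * m x ∂(mu d) + ∫ x, m x ^ 2 ∂(mu d)
        = ∫ x, S x ^ 2 ∂(mu d) := by
      rw [← integral_const_mul, ← add3 iD2 (iDm.const_mul _) im2]
      congr 1
      ext x
      simp only [hD]
      ring
    have h3 : ∫ x, m x ^ 2 ∂(mu d) = (3 : ℝ) ^ (-(d : ℤ)) := int_m_sq d
    rw [hK]; linarith
  by_contra hcon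
  push Not at hcon
  set g : (Fin d → ℝ) → ℝ := fun t => ρd t * (∫ x, D x ^ 2 ∂(mu d) - K) +
    2 * (∫ x, D x * ind t x ∂(mu d)) + (∏ j, (1 - t j)) / ρd t with hg
  have ig : Integrable g (mu d) := ((hρ.mul_const _).add (iG.const_mul 2)).add hint
  have hg0 : ∫ t, g t ∂(mu d) = 0 := by
    simp only [hg]
    rw [add3 (hρ.mul_const _) (iG.const_mul 2) hint, integral_mul_const, integral_const_mul,
      hprob, hG]
    linarith
  have hgpos : ∀ᵐ t ∂(mu d), 0 < g t := by
    filter_upwards [hpos, ae_restrict_mem measurableSet_Icc] with t h1 h2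
    have h3 := hcon t h2 h1
    have h4 := hF t h2
    rw [h4] at h3
    have h5 := mul_pos h1 (sub_pos.2 h3)
    refine lt_of_lt_of_eq h5 ?_
    simp only [hg]
    field_simp
    ring
  have hz := (integral_eq_zero_iff_of_nonneg_ae (hgpos.mono fun t ht => ht.le) ig).1 hg0
  obtain ⟨t, h1, h2⟩ := (hgpos.and hz).exists
  simp only [Pi.zero_apply] at h2
  linarith

lemma iter {d : ℕ} (ρd : (Fin d → ℝ) → ℝ)
    (hprob : ∫ t, ρd t ∂(mu d) = 1)
    (hpos : ∀ᵐ t ∂(mu d), 0 < ρd t)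
    (hint : Integrable (fun t : Fin d → ℝ => (∏ j, (1 - t j)) / ρd t) (mu d)) (n : ℕ) :
    ∃ t : Fin n → Fin d → ℝ, (∀ k, t k ∈ Set.Icc (0 : Fin d → ℝ) 1) ∧ (∀ k, 0 < ρd (t k)) ∧
      ∫ x, (∑ k, (1 / ρd (t k) * ind (t k) x - ∏ j, x j)) ^ 2 ∂(mu d) ≤
        n * ((∫ t, (∏ j, (1 - t j)) / ρd t ∂(mu d)) - (3 : ℝ) ^ (-(d : ℤ))) := by
  induction n with
  | zero => exact ⟨fun k => 0, fun k => k.elim0, fun k => k.elim0, by simp⟩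
  | succ n ih =>
    obtain ⟨t, h1, h2, h3⟩ := ih
    obtain ⟨s, hs1, hs2, hs3⟩ := step ρd hprob hpos hint
      (fun x => ∑ k, (1 / ρd (t k) * ind (t k) x - ∏ j, x j))
      (Finset.measurable_sum _ fun k _ =>
        ((ind_meas_left (t k)).const_mul _).sub (by fun_prop))
      (∑ k, (1 / ρd (t k) + 1)) (fun x hx => by
        refine (Finset.abs_sum_le_sum_abs _ _).trans (Finset.sum_le_sum fun k _ => ?_)
        refine (abs_sub _ _).trans (add_le_add ?_ (m_bound x hx))
        have := one_div_pos.2 (h2 k)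
        rw [abs_of_nonneg (mul_nonneg this.le (ind_nonneg _ _))]
        exact mul_le_of_le_one_right this.le (ind_le _ _))
    refine ⟨Fin.snoc t s, fun k => ?_, fun k => ?_, ?_⟩
    · refine Fin.lastCases ?_ (fun i => ?_) k
      · simpa using hs1
      · simpa using h1 i
    · refine Fin.lastCases ?_ (fun i => ?_) k
      · simpa using hs2
      · simpa using h2 i
    · simp only [Fin.sum_univ_castSucc, Fin.snoc_castSucc, Fin.snoc_last]
      push_cast
      linarith

end DiscAux


/-- There exist deterministic points `t₁,…,t_N ∈ [0,1]^d` with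
`ρd(t_k) > 0` such that, with weights `a_k = 1/(N ρd(t_k))`, the squared
`L₂`-discrepancy is at most `(C - 3^{-d})/N`. -/
theorem exists_points_squared_discrepancy_le
    (d N : ℕ) (hN : 0 < N)
    (ρd : (Fin d → ℝ) → ℝ)
    (hmeas : Measurable ρd)
    (hnonneg : ∀ t, 0 ≤ ρd t)
    (hprob : ∫ t in Set.Icc (0 : Fin d → ℝ) 1, ρd t = 1)
    (hpos : ∀ᵐ t ∂(volume.restrict (Set.Icc (0 : Fin d → ℝ) 1)), 0 < ρd t)
    (hint : IntegrableOn (fun t : Fin d → ℝ => (∏ j, (1 - t j)) / ρd t)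
      (Set.Icc (0 : Fin d → ℝ) 1))
    (C : ℝ)
    (hC : C = ∫ t in Set.Icc (0 : Fin d → ℝ) 1, (∏ j, (1 - t j)) / ρd t) :
    ∃ t : Fin N → Fin d → ℝ,
      (∀ k, t k ∈ Set.Icc (0 : Fin d → ℝ) 1) ∧
      (∀ k, 0 < ρd (t k)) ∧
      (∫ x in Set.Icc (0 : Fin d → ℝ) 1,
          ((∑ k, (1 / (N * ρd (t k))) *
              (if ∀ j, t k j < x j then (1 : ℝ) else 0)) - ∏ j, x j) ^ 2)
        ≤ (C - (3 : ℝ) ^ (-(d : ℤ))) / N := by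
  obtain ⟨t, h1, h2, h3⟩ := DiscAux.iter ρd hprob hpos hint N
  refine ⟨t, h1, h2, ?_⟩
  have hN' : (0 : ℝ) < N := by exact_mod_cast hN
  have e : ∀ x : Fin d → ℝ, ((∑ k, (1 / (N * ρd (t k))) *
              (if ∀ j, t k j < x j then (1 : ℝ) else 0)) - ∏ j, x j) ^ 2
      = (1 / (N : ℝ)) ^ 2 *
        (∑ k, (1 / ρd (t k) * DiscAux.ind (t k) x - ∏ j, x j)) ^ 2 := by
    intro x
    rw [← mul_pow]
    congr 1
    rw [Finset.sum_sub_distrib, mul_sub, Finset.mul_sum]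
    congr 1
    · refine Finset.sum_congr rfl fun k _ => ?_
      rw [DiscAux.ind, ← mul_assoc, one_div_mul_one_div]
    · simp
      field_simp
  simp_rw [e]
  rw [integral_const_mul, hC]
  refine (mul_le_mul_of_nonneg_left h3 (by positivity)).trans (le_of_eq ?_)
  field_simp
end

section
/- For every measurable function ρ : [0,1] → [0,∞] with ∫_0^1 ρ(t) dt = 1 one has ∫_0^1 (1−t)/ρ(t) dt ≥ 4/9 (with the convention (1−t)/0 = ∞ when t < 1). Moreover, the density ρ*(t) = (3/2)√(1−t) satisfies ∫_0^1 ρ*(t) dt = 1 and attains equality: ∫_0^1 (1−t)/ρ*(t) dt = 4/9. -/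
open MeasureTheory ENNReal

theorem aux_interval : ∫ t in (0:ℝ)..1, Real.sqrt (1 - t) = 2 / 3 := by
  have h := intervalIntegral.integral_comp_sub_left (a := 0) (b := 1) (fun x : ℝ => Real.sqrt x) 1
  rw [h]
  simp only [Real.sqrt_eq_rpow]
  rw [integral_rpow (by left; norm_num)]
  norm_num

theorem aux_lint (c : ℝ) (hc : 0 ≤ c) :
    (∫⁻ t in Set.Icc (0 : ℝ) 1, ENNReal.ofReal (c * Real.sqrt (1 - t))) =
      ENNReal.ofReal (c * (2 / 3)) := by
  rw [← ofReal_integral_eq_lintegral_ofReal]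
  · rw [integral_Icc_eq_integral_Ioc, ← intervalIntegral.integral_of_le (by norm_num),
      intervalIntegral.integral_const_mul, aux_interval]
  · exact ContinuousOn.integrableOn_Icc (by fun_prop)
  · exact Filter.Eventually.of_forall fun t => by positivity

theorem aux_pt (t : ℝ) (ht : t ≤ 1) (r : ℝ≥0∞) :
    ENNReal.ofReal (4 / 3 * Real.sqrt (1 - t)) ≤
      ENNReal.ofReal (1 - t) / r + ENNReal.ofReal (4 / 9) * r := by
  have hs : Real.sqrt (1 - t) ^ 2 = 1 - t := Real.sq_sqrt (by linarith)
  rcases eq_or_ne r ⊤ with rfl | hr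
  · rw [ENNReal.mul_top (by norm_num)]
    simp
  rcases eq_or_ne r 0 with rfl | h0
  · rcases eq_or_lt_of_le ht with rfl | h
    · simp
    · rw [ENNReal.div_zero (by simpa using h)]
      simp
  · lift r to NNReal using hr
    have hp : (0 : ℝ) < r := by
      have : r ≠ 0 := by simpa using h0
      exact_mod_cast pos_iff_ne_zero.mpr this
    have e : (r : ℝ≥0∞) = ENNReal.ofReal (r : ℝ) := by simp
    rw [e, ← ENNReal.ofReal_div_of_pos hp, ← ENNReal.ofReal_mul (by norm_num),
      ← ENNReal.ofReal_add (div_nonneg (by linarith) hp.le) (by positivity)]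
    apply ENNReal.ofReal_le_ofReal
    generalize Real.sqrt (1 - t) = s at hs ⊢
    rw [← hs]
    have : s ^ 2 / (r : ℝ) + 4 / 9 * r - 4 / 3 * s = (s - 2 / 3 * r) ^ 2 / r := by
      field_simp
      ring
    have h2 : 0 ≤ (s - 2 / 3 * r) ^ 2 / (r : ℝ) := by positivity
    linarith

/-- For every probability density `ρ` on `[0,1]` one has
`∫_0^1 (1-t)/ρ(t) dt ≥ 4/9`, and the density `ρ*(t) = (3/2)√(1-t)` is a
probability density attaining equality. -/
theorem C_K1_min_density :
    (∀ ρ : ℝ → ℝ≥0∞, Measurable ρ →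
        (∫⁻ t in Set.Icc (0 : ℝ) 1, ρ t) = 1 →
        ENNReal.ofReal (4 / 9) ≤ ∫⁻ t in Set.Icc (0 : ℝ) 1, ENNReal.ofReal (1 - t) / ρ t) ∧
    (∫⁻ t in Set.Icc (0 : ℝ) 1, ENNReal.ofReal ((3 / 2) * Real.sqrt (1 - t))) = 1 ∧
    (∫⁻ t in Set.Icc (0 : ℝ) 1,
        ENNReal.ofReal (1 - t) / ENNReal.ofReal ((3 / 2) * Real.sqrt (1 - t)))
      = ENNReal.ofReal (4 / 9) := by
  refine ⟨fun ρ hρ h1 => ?_, ?_, ?_⟩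
  · have key : (∫⁻ t in Set.Icc (0 : ℝ) 1, ENNReal.ofReal (4 / 3 * Real.sqrt (1 - t))) ≤
        ∫⁻ t in Set.Icc (0 : ℝ) 1,
          (ENNReal.ofReal (1 - t) / ρ t + ENNReal.ofReal (4 / 9) * ρ t) :=
      setLIntegral_mono' measurableSet_Icc fun t ht => aux_pt t ht.2 (ρ t)
    rw [aux_lint _ (by norm_num), lintegral_add_right _ (hρ.const_mul _),
      lintegral_const_mul _ hρ, h1, mul_one,
      show (4 / 3 * (2 / 3) : ℝ) = 4 / 9 + 4 / 9 by norm_num,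
      ENNReal.ofReal_add (by norm_num) (by norm_num)] at key
    exact (ENNReal.add_le_add_iff_right ENNReal.ofReal_ne_top).mp key
  · rw [aux_lint _ (by norm_num)]
    norm_num
  · rw [show (4 / 9 : ℝ) = 2 / 3 * (2 / 3) by norm_num, ← aux_lint _ (by norm_num)]
    refine setLIntegral_congr_fun measurableSet_Icc fun t ht => ?_
    rcases eq_or_lt_of_le ht.2 with rfl | h
    · simp
    · have hs : 0 < Real.sqrt (1 - t) := Real.sqrt_pos.mpr (by linarith)
      have hq : Real.sqrt (1 - t) ^ 2 = 1 - t := Real.sq_sqrt (by linarith)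
      rw [← ENNReal.ofReal_div_of_pos (by positivity)]
      congr 1
      rw [div_eq_iff (by positivity)]
      linarith
end

section
/- Let d, N ∈ ℕ and let ρ_d*(t) = ∏_{j=1}^d (3/2)√(1−t_j) on [0,1]^d. If t_1,…,t_N are i.i.d. random points in [0,1]^d with law ρ_d*(t)dt and the weights are a_k = 1/(N ρ_d*(t_k)), then E[∫_{[0,1]^d} Δ(x)² dx] = ((4/9)^d − 3^{−d})/N, and consequently the normalized average discrepancy satisfies 3^{d/2}·(E[∫_{[0,1]^d} Δ(x)² dx])^{1/2} ≤ (4/3)^{d/2}·N^{−1/2}. -/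
open MeasureTheory

noncomputable def lam : Measure ℝ := volume.restrict (Set.Icc 0 1)
instance : IsProbabilityMeasure lam := ⟨by simp [lam]⟩

lemma lam_integral (f : ℝ → ℝ) : ∫ t, f t ∂lam = ∫ t in (0:ℝ)..1, f t := by
  rw [lam, integral_Icc_eq_integral_Ioc, intervalIntegral.integral_of_le zero_le_one]

lemma lam_integrable (f : ℝ → ℝ) : Integrable f lam ↔ IntervalIntegrable f volume 0 1 := by
  rw [lam, intervalIntegrable_iff_integrableOn_Icc_of_le zero_le_one]; rfl

lemma lam_ind (f : ℝ → ℝ) (x : ℝ) (hx : x ∈ Set.Icc (0:ℝ) 1) :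
    ∫ t, f t * (if t < x then (1:ℝ) else 0) ∂lam = ∫ t in (0:ℝ)..x, f t := by
  have : (fun t => f t * (if t < x then (1:ℝ) else 0)) = (Set.Iio x).indicator f := by
    ext t; simp [Set.indicator_apply]
  rw [this, integral_indicator measurableSet_Iio, lam, Measure.restrict_restrict measurableSet_Iio,
    intervalIntegral.integral_of_le hx.1, ← integral_Ico_eq_integral_Ioc]
  congr 2
  ext t; simp only [Set.mem_inter_iff, Set.mem_Iio, Set.mem_Icc, Set.mem_Ico]
  constructor
  · rintro ⟨h, h1, h2⟩; exact ⟨h1, h⟩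
  · rintro ⟨h, h1⟩; exact ⟨h1, h, by linarith [hx.2]⟩

noncomputable def r1 (t : ℝ) : ℝ := (3 / 2) * Real.sqrt (1 - t)
noncomputable def w1 (t : ℝ) : ℝ := (r1 t)⁻¹

lemma r1_meas : Measurable r1 := by unfold r1; fun_prop
lemma w1_meas : Measurable w1 := r1_meas.inv
lemma r1_nonneg (t : ℝ) : 0 ≤ r1 t := by unfold r1; positivity
lemma r1_int : Integrable r1 lam := by
  rw [lam_integrable]; apply Continuous.intervalIntegrable; unfold r1; fun_prop
lemma sqrt_integral : ∫ t in (0:ℝ)..1, Real.sqrt (1 - t) = 2/3 := by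
  rw [intervalIntegral.integral_comp_sub_left (fun t => Real.sqrt t)]
  simp only [Real.sqrt_eq_rpow]
  rw [integral_rpow (by left; norm_num)]
  norm_num
lemma r1_integral : ∫ t, r1 t ∂lam = 1 := by
  rw [lam_integral]; unfold r1
  rw [intervalIntegral.integral_const_mul, sqrt_integral]; norm_num
lemma r1_pos : ∀ᵐ t ∂lam, 0 < r1 t := by
  have h1 : ∀ᵐ t ∂lam, t ∈ Set.Icc (0:ℝ) 1 := ae_restrict_mem measurableSet_Icc
  have h2 : ∀ᵐ t ∂lam, t ≠ 1 := ae_restrict_of_ae (by simp [ae_iff])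
  filter_upwards [h1, h2] with t h1 h2
  have : 0 < 1 - t := by have := lt_of_le_of_ne h1.2 h2; linarith
  unfold r1; positivity
lemma w1_eq (t : ℝ) (ht : t ≤ 1) : w1 t = (2/3) * (1 - t) ^ (-(1/2) : ℝ) := by
  rw [Real.rpow_neg (by linarith), ← Real.sqrt_eq_rpow, w1, r1, mul_inv]; norm_num
lemma w1_int : Integrable w1 lam := by
  have : IntervalIntegrable (fun t : ℝ => (2/3) * (1 - t) ^ (-(1/2) : ℝ)) volume 0 1 := by
    apply IntervalIntegrable.const_mul
    have h := (intervalIntegral.intervalIntegrable_rpow' (a := 0) (b := 1) (r := -(1/2)) (by norm_num)).comp_sub_left 1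
    simpa using h.symm
  rw [← lam_integrable] at this
  refine this.congr ?_
  have h1 : ∀ᵐ t ∂lam, t ∈ Set.Icc (0:ℝ) 1 := ae_restrict_mem measurableSet_Icc
  filter_upwards [h1] with t h1
  rw [w1_eq t h1.2]
lemma w1_integral (x : ℝ) (hx : x ∈ Set.Icc (0:ℝ) 1) :
    ∫ t, w1 t * (if t < x then (1:ℝ) else 0) ∂lam = (4/3) * (1 - Real.sqrt (1 - x)) := by
  rw [lam_ind _ x hx]
  have : ∫ t in (0:ℝ)..x, w1 t = ∫ t in (0:ℝ)..x, (2/3) * (1 - t) ^ (-(1/2) : ℝ) := by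
    apply intervalIntegral.integral_congr
    intro t ht
    rw [Set.uIcc_of_le hx.1] at ht
    exact w1_eq t (by linarith [ht.2, hx.2])
  rw [this, intervalIntegral.integral_const_mul,
    intervalIntegral.integral_comp_sub_left (fun t => t ^ (-(1/2) : ℝ)),
    integral_rpow (by left; norm_num), Real.sqrt_eq_rpow]
  norm_num
  ring
lemma one_integral (x : ℝ) (hx : x ∈ Set.Icc (0:ℝ) 1) :
    ∫ t, (if t < x then (1:ℝ) else 0) ∂lam = x := by
  have := lam_ind (fun _ => 1) x hx
  simpa using this
lemma w1_integral2 : ∫ x, (4/3) * (1 - Real.sqrt (1 - x)) ∂lam = 4/9 := by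
  rw [lam_integral, intervalIntegral.integral_const_mul, intervalIntegral.integral_sub,
    sqrt_integral]
  · norm_num
  · simp
  · apply Continuous.intervalIntegrable; fun_prop
lemma sq_integral : ∫ x, x ^ 2 ∂lam = 1/3 := by
  rw [lam_integral, integral_pow]; norm_num

lemma absL {Ω X : Type*} [MeasurableSpace Ω] [MeasurableSpace X] (μ : Measure Ω) (κ : Measure X)
    [IsProbabilityMeasure μ] [IsProbabilityMeasure κ] (ρ : Ω → ℝ) (s : Ω → X → ℝ) (g h : X → ℝ)
    (hρm : Measurable ρ) (hρ0 : ∀ t, 0 ≤ ρ t) (hρp : ∀ᵐ t ∂μ, 0 < ρ t) (hρi : Integrable ρ μ)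
    (hρ1 : ∫ t, ρ t ∂μ = 1) (hwi : Integrable (fun t => (ρ t)⁻¹) μ)
    (hsm : Measurable (Function.uncurry s)) (hs : ∀ t x, s t x = 0 ∨ s t x = 1)
    (hgm : Measurable g) (hg : ∀ᵐ x ∂κ, ∫ t, s t x ∂μ = g x)
    (hh : ∀ᵐ x ∂κ, ∫ t, (ρ t)⁻¹ * s t x ∂μ = h x) (N : ℕ) (hN : 0 < N) :
    ∫ T, (∏ k, ρ (T k)) * ∫ x, ((∑ k, (1 / (N * ρ (T k))) * s (T k) x) - g x) ^ 2 ∂κ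
      ∂(Measure.pi (fun _ : Fin N => μ)) = (∫ x, (h x - g x ^ 2) ∂κ) / N := by
  have hN' : (N : ℝ) ≠ 0 := by positivity
  have hwm : Measurable (fun t => (ρ t)⁻¹) := hρm.inv
  have hsx : ∀ x, Measurable (fun t => s t x) := fun x => hsm.comp (measurable_id.prodMk measurable_const)
  have hsi : ∀ x, Integrable (fun t => s t x) μ := fun x =>
    Integrable.of_bound (C := 1) (hsx x).aestronglyMeasurable
      (.of_forall fun t => by rcases hs t x with h | h <;> simp [h])
  have hg1 : ∀ᵐ x ∂κ, |g x| ≤ 1 := by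
    filter_upwards [hg] with x hx
    rw [← hx, ← Real.norm_eq_abs]
    refine (norm_integral_le_of_norm_le_const (C := 1)
      (.of_forall fun t => by rcases hs t x with h | h <;> simp [h])).trans ?_
    simp
  set φ : ℕ → Ω → X → ℝ := fun n t x => ρ t * ((ρ t)⁻¹ * s t x - g x) ^ n with hφ
  set ψ : ℕ → Ω → ℝ := fun n t => ρ t * ((ρ t)⁻¹ + 1) ^ n with hψ
  have hψi : ∀ n, n ≤ 2 → Integrable (ψ n) μ := by
    intro n hn
    have : Integrable (fun t => (ρ t)⁻¹ + 2 + ρ t) μ := (hwi.add (integrable_const _)).add hρi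
    interval_cases n
    · simpa [hψ] using hρi
    · refine ((integrable_const (1:ℝ)).add hρi).congr ?_
      filter_upwards [hρp] with t ht
      simp only [hψ, Pi.add_apply]; field_simp; try ring
    · refine this.congr ?_
      filter_upwards [hρp] with t ht
      simp only [hψ]; field_simp; ring
  have hφb : ∀ n t x, |g x| ≤ 1 → ‖φ n t x‖ ≤ ψ n t := by
    intro n t x hx
    simp only [hφ, hψ, norm_mul, norm_pow, Real.norm_eq_abs, abs_of_nonneg (hρ0 t)]
    have h0 := inv_nonneg.2 (hρ0 t)
    have : |(ρ t)⁻¹ * s t x - g x| ≤ (ρ t)⁻¹ + 1 := by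
      rw [abs_le] at hx ⊢
      rcases hs t x with h | h <;> rw [h] <;> constructor <;> linarith [hx.1, hx.2]
    have := hρ0 t
    gcongr
  have hφm : ∀ n, Measurable (fun p : Ω × X => φ n p.1 p.2) := by
    intro n
    have := hsm
    have h2 : Measurable (fun p : Ω × X => s p.1 p.2) := hsm
    simp only [hφ]; fun_prop
  set c : Fin N → Fin N → Fin N → ℕ := fun k l m => (if m = k then 1 else 0) + (if m = l then 1 else 0) with hc
  have hc2 : ∀ k l m, c k l m ≤ 2 := by intro k l m; simp only [hc]; split_ifs <;> norm_num
  set P : Fin N → Fin N → (Fin N → Ω) → X → ℝ := fun k l T x => ∏ m, φ (c k l m) (T m) x with hP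
  have hPe : ∀ k l T x, P k l T x = (∏ m, ρ (T m)) * (((ρ (T k))⁻¹ * s (T k) x - g x) *
      ((ρ (T l))⁻¹ * s (T l) x - g x)) := by
    intro k l T x
    simp only [hP, hφ, hc, Finset.prod_mul_distrib, pow_add]
    have hk : ∀ (f : Fin N → ℝ) (k : Fin N), ∏ m, f m ^ (if m = k then 1 else 0) = f k := by
      intro f k
      rw [Finset.prod_eq_single k] <;> simp +contextual
    rw [hk (fun m => (ρ (T m))⁻¹ * s (T m) x - g x), hk (fun m => (ρ (T m))⁻¹ * s (T m) x - g x)]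
  have hPi : ∀ k l, Integrable (Function.uncurry (P k l)) ((Measure.pi (fun _ : Fin N => μ)).prod κ) := by
    intro k l
    have h1 : Integrable (fun T : Fin N → Ω => ∏ m, ψ (c k l m) (T m)) (Measure.pi (fun _ : Fin N => μ)) :=
      Integrable.fintype_prod (f := fun m => ψ (c k l m)) fun m => hψi _ (hc2 k l m)
    refine (h1.comp_fst κ).mono' ?_ ?_
    · apply Measurable.aestronglyMeasurable
      show Measurable (fun p : (Fin N → Ω) × X => ∏ m, φ (c k l m) (p.1 m) p.2)
      refine Finset.measurable_prod _ fun m _ => ?_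
      have hpr : Measurable (fun p : (Fin N → Ω) × X => (p.1 m, p.2)) := by fun_prop
      exact (hφm (c k l m)).comp hpr
    · filter_upwards [Measure.quasiMeasurePreserving_snd.ae hg1] with p hp
      show ‖∏ m, φ (c k l m) (p.1 m) p.2‖ ≤ _
      rw [norm_prod]
      exact Finset.prod_le_prod (fun _ _ => norm_nonneg _) fun m _ => hφb _ _ _ hp
  have hF : ∀ T x, (∏ k, ρ (T k)) * ((∑ k, (1 / (N * ρ (T k))) * s (T k) x) - g x) ^ 2
      = ∑ k, ∑ l, (1 / (N:ℝ)^2) * P k l T x := by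
    intro T x
    have : (∑ k, (1 / (N * ρ (T k))) * s (T k) x) - g x =
        (1 / (N:ℝ)) * ∑ k, ((ρ (T k))⁻¹ * s (T k) x - g x) := by
      rw [Finset.sum_sub_distrib, mul_sub, Finset.mul_sum]
      simp only [Finset.sum_const, Finset.card_univ, Fintype.card_fin, nsmul_eq_mul]
      congr 1
      · refine Finset.sum_congr rfl fun k _ => ?_
        rw [one_div, mul_inv]; ring
      · field_simp
    rw [this]
    simp only [hPe, ← Finset.mul_sum, ← Finset.sum_mul]
    ring
  have hI : ∀ᵐ x ∂κ, ∀ k l, ∫ T, P k l T x ∂(Measure.pi (fun _ : Fin N => μ)) =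
      if k = l then h x - g x ^ 2 else 0 := by
    filter_upwards [hg, hh] with x hgx hhx k l
    have hwsi : Integrable (fun t => (ρ t)⁻¹ * s t x) μ := by
      refine hwi.mono (hwm.mul (hsx x)).aestronglyMeasurable (.of_forall fun t => ?_)
      rcases hs t x with h | h <;> simp [h]
    have i0 : ∫ t, φ 0 t x ∂μ = 1 := by simpa [hφ] using hρ1
    have i1 : ∫ t, φ 1 t x ∂μ = 0 := by
      have : ∫ t, φ 1 t x ∂μ = ∫ t, (s t x - ρ t * g x) ∂μ := by
        apply integral_congr_ae
        filter_upwards [hρp] with t ht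
        simp only [hφ]; field_simp
      rw [this, integral_sub (hsi x) (hρi.mul_const _), integral_mul_const, hρ1, hgx]; ring
    have i2 : ∫ t, φ 2 t x ∂μ = h x - g x ^ 2 := by
      have : ∫ t, φ 2 t x ∂μ = ∫ t, ((ρ t)⁻¹ * s t x - (s t x * (2 * g x) - ρ t * g x ^ 2)) ∂μ := by
        apply integral_congr_ae
        filter_upwards [hρp] with t ht
        have e : s t x ^ 2 = s t x := by rcases hs t x with h | h <;> simp [h]
        have e2 : ρ t * (ρ t)⁻¹ = 1 := mul_inv_cancel₀ ht.ne'
        simp only [hφ]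
        linear_combination (ρ t * (ρ t)⁻¹ ^ 2) * e + ((ρ t)⁻¹ * s t x - 2 * g x * s t x) * e2
      have hi : Integrable (fun t => s t x * (2 * g x) - ρ t * g x ^ 2) μ :=
        ((hsi x).mul_const _).sub (hρi.mul_const _)
      rw [this, integral_sub hwsi hi,
        integral_sub ((hsi x).mul_const _) (hρi.mul_const _), integral_mul_const, integral_mul_const,
        hρ1, hgx, hhx]; ring
    simp only [hP]
    rw [integral_fintype_prod_eq_prod (f := fun m t => φ (c k l m) t x)]
    split_ifs with hkl
    · subst hkl
      rw [Finset.prod_eq_single k]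
      · simp [hc, i2]
      · intro m _ hm; simp [hc, hm, i0]
      · simp
    · apply Finset.prod_eq_zero (Finset.mem_univ k)
      simp [hc, hkl, i1]
  have step : ∫ T, (∏ k, ρ (T k)) * ∫ x, ((∑ k, (1 / (N * ρ (T k))) * s (T k) x) - g x) ^ 2 ∂κ
      ∂(Measure.pi (fun _ : Fin N => μ)) = ∫ T, ∫ x, (∑ k, ∑ l, (1 / (N:ℝ)^2) * P k l T x) ∂κ
      ∂(Measure.pi (fun _ : Fin N => μ)) := by
    simp only [← hF, integral_const_mul]
  have hint : Integrable (Function.uncurry fun T x => ∑ k, ∑ l, (1 / (N:ℝ)^2) * P k l T x)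
      ((Measure.pi (fun _ : Fin N => μ)).prod κ) := by
    exact integrable_finsetSum _ fun k _ => integrable_finsetSum _ fun l _ => (hPi k l).const_mul _
  rw [step, integral_integral_swap hint, ← integral_div]
  apply integral_congr_ae
  have hPx : ∀ᵐ x ∂κ, ∀ k l, Integrable (fun T => P k l T x) (Measure.pi (fun _ : Fin N => μ)) := by
    rw [ae_all_iff]; intro k; rw [ae_all_iff]; intro l
    exact (hPi k l).prod_left_ae
  filter_upwards [hI, hPx] with x hx hpx
  rw [integral_finsetSum _ fun k _ => integrable_finsetSum _ fun l _ => (hpx k l).const_mul _]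
  simp_rw [integral_finsetSum _ fun l _ => (hpx _ l).const_mul _, integral_const_mul, hx]
  simp
  field_simp

noncomputable def muD (d : ℕ) : Measure (Fin d → ℝ) := Measure.pi (fun _ => lam)
instance (d : ℕ) : IsProbabilityMeasure (muD d) := by unfold muD; infer_instance

lemma vol_restrict (d : ℕ) : (volume : Measure (Fin d → ℝ)).restrict (Set.Icc 0 1) = muD d := by
  rw [muD, ← Set.pi_univ_Icc, volume_pi, Measure.restrict_pi_pi]; rfl

lemma vol_restrict2 (d N : ℕ) : (volume : Measure (Fin N → Fin d → ℝ)).restrict (Set.Icc 0 1)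
    = Measure.pi (fun _ => muD d) := by
  rw [← Set.pi_univ_Icc, volume_pi, Measure.restrict_pi_pi]
  simp_rw [← vol_restrict]; rfl

lemma main_eq (d N : ℕ) (hN : 0 < N)
    (ρd : (Fin d → ℝ) → ℝ)
    (hρd : ∀ t, ρd t = ∏ j, (3 / 2) * Real.sqrt (1 - t j)) :
    ∫ T in Set.Icc (0 : Fin N → Fin d → ℝ) 1,
        (∏ k, ρd (T k)) *
          ∫ x in Set.Icc (0 : Fin d → ℝ) 1,
            ((∑ k, (1 / (N * ρd (T k))) *
                (if ∀ j, T k j < x j then (1 : ℝ) else 0)) - ∏ j, x j) ^ 2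
     = ((4 / 9 : ℝ) ^ d - (3 : ℝ) ^ (-(d : ℤ))) / N := by
  have hρ : ρd = fun t => ∏ j, r1 (t j) := funext hρd
  have hinv : ∀ t, (ρd t)⁻¹ = ∏ j, w1 (t j) := by
    intro t; rw [hρ]; simp [w1, Finset.prod_inv_distrib]
  have hs : ∀ t x : Fin d → ℝ, (if ∀ j, t j < x j then (1:ℝ) else 0) = ∏ j, if t j < x j then (1:ℝ) else 0 := by
    intro t x; rw [Fintype.prod_boole]; congr
  rw [vol_restrict2, vol_restrict]
  have hmem : ∀ᵐ x ∂muD d, ∀ j, x j ∈ Set.Icc (0:ℝ) 1 := by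
    rw [← vol_restrict]
    filter_upwards [ae_restrict_mem measurableSet_Icc] with x hx j
    exact ⟨hx.1 j, hx.2 j⟩
  have hpos : ∀ᵐ t ∂muD d, ∀ j, 0 < r1 (t j) := by
    rw [ae_all_iff]; intro j
    exact (Measure.quasiMeasurePreserving_eval (fun _ : Fin d => lam) j).ae r1_pos
  rw [absL (muD d) (muD d) ρd (fun t x => if ∀ j, t j < x j then (1:ℝ) else 0) (fun x => ∏ j, x j)
    (fun x => ∏ j, (4/3) * (1 - Real.sqrt (1 - x j))) _ _ _ _ _ _ _ _ _ _ _ N hN]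
  · congr 1
    rw [integral_sub]
    · simp_rw [← Finset.prod_pow]
      rw [muD, integral_fintype_prod_eq_prod (f := fun _ t => (4/3) * (1 - Real.sqrt (1 - t))),
        integral_fintype_prod_eq_prod (f := fun _ t => t ^ 2)]
      simp [w1_integral2, sq_integral, div_pow]
    · exact Integrable.fintype_prod (f := fun _ t => (4/3) * (1 - Real.sqrt (1 - t))) fun _ => by
        rw [lam_integrable]; apply Continuous.intervalIntegrable; fun_prop
    · simp_rw [← Finset.prod_pow]
      exact Integrable.fintype_prod (f := fun _ t => t ^ 2) fun _ => by
        rw [lam_integrable]; apply Continuous.intervalIntegrable; fun_prop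
  · rw [hρ]; exact Finset.measurable_prod _ fun j _ => r1_meas.comp (measurable_pi_apply j)
  · intro t; rw [hρ]; exact Finset.prod_nonneg fun j _ => r1_nonneg _
  · filter_upwards [hpos] with t ht
    rw [hρ]; exact Finset.prod_pos fun j _ => ht j
  · rw [hρ]; exact Integrable.fintype_prod (f := fun _ => r1) fun _ => r1_int
  · rw [hρ, muD, integral_fintype_prod_eq_prod (f := fun _ => r1)]; simp [r1_integral]
  · simp_rw [hinv]; exact Integrable.fintype_prod (f := fun _ => w1) fun _ => w1_int
  · simp_rw [hs]
    refine Finset.measurable_prod _ fun j _ => ?_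
    exact Measurable.ite (measurableSet_lt (by fun_prop) (by fun_prop)) measurable_const measurable_const
  · intro t x; split_ifs <;> simp
  · fun_prop
  · filter_upwards [hmem] with x hx
    simp_rw [hs]
    rw [muD, integral_fintype_prod_eq_prod (f := fun j t => if t < x j then (1:ℝ) else 0)]
    exact Finset.prod_congr rfl fun j _ => one_integral _ (hx j)
  · filter_upwards [hmem] with x hx
    simp_rw [hs, hinv, ← Finset.prod_mul_distrib]
    rw [muD, integral_fintype_prod_eq_prod (f := fun j t => w1 t * if t < x j then (1:ℝ) else 0)]
    exact Finset.prod_congr rfl fun j _ => w1_integral _ (hx j)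


/-- For i.i.d. points drawn from the optimal product density
`ρd*(t) = ∏_j (3/2)√(1-t_j)` with weights `a_k = 1/(N ρd*(t_k))`, the expected
squared `L₂`-discrepancy equals `((4/9)^d - 3^{-d})/N`, and hence the
normalized average discrepancy satisfies
`3^{d/2} √E ≤ (4/3)^{d/2} N^{-1/2}`. -/
theorem expected_squared_discrepancy_optimal_density
    (d N : ℕ) (hN : 0 < N)
    (ρd : (Fin d → ℝ) → ℝ)
    (hρd : ∀ t, ρd t = ∏ j, (3 / 2) * Real.sqrt (1 - t j))
    (E : ℝ)
    (hE : E = ∫ T in Set.Icc (0 : Fin N → Fin d → ℝ) 1,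
        (∏ k, ρd (T k)) *
          ∫ x in Set.Icc (0 : Fin d → ℝ) 1,
            ((∑ k, (1 / (N * ρd (T k))) *
                (if ∀ j, T k j < x j then (1 : ℝ) else 0)) - ∏ j, x j) ^ 2) :
    E = ((4 / 9 : ℝ) ^ d - (3 : ℝ) ^ (-(d : ℤ))) / N ∧
    (3 : ℝ) ^ ((d : ℝ) / 2) * Real.sqrt E
      ≤ (4 / 3 : ℝ) ^ ((d : ℝ) / 2) * (N : ℝ) ^ (-(1 : ℝ) / 2) := by
  have h1 := main_eq d N hN ρd hρd
  rw [← hE] at h1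
  refine ⟨h1, ?_⟩
  have hN' : (0:ℝ) < N := by exact_mod_cast hN
  have e3 : ∀ a : ℝ, 0 ≤ a → a ^ ((d:ℝ)/2) = Real.sqrt (a ^ d) := by
    intro a ha
    rw [Real.sqrt_eq_rpow, ← Real.rpow_natCast, ← Real.rpow_mul ha]; ring_nf
  have e4 : (N:ℝ) ^ (-(1:ℝ)/2) = Real.sqrt ((N:ℝ)⁻¹) := by
    rw [Real.sqrt_eq_rpow, Real.inv_rpow hN'.le, ← Real.rpow_neg hN'.le]; norm_num
  rw [e3 _ (by norm_num), e3 _ (by norm_num), e4, ← Real.sqrt_mul (by positivity),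
    ← Real.sqrt_mul (by positivity)]
  apply Real.sqrt_le_sqrt
  rw [h1, div_eq_mul_inv, ← mul_assoc]
  gcongr
  have : (3:ℝ)^d * (4/9)^d = (4/3)^d := by rw [← mul_pow]; norm_num
  rw [mul_sub, this]
  have : (0:ℝ) ≤ 3 ^ d * 3 ^ (-(d:ℤ)) := by positivity
  linarith
end

section
/- Let d, N ∈ ℕ with N ≥ 1, let ρ_d be a probability density on [0,1]^d with ρ_d > 0 almost everywhere and C := ∫_{[0,1]^d} (∏_{j=1}^d (1−t_j))/ρ_d(t) dt < ∞, and let t_1,…,t_N be i.i.d. with law ρ_d(t)dt. For c > 0 consider the weights a_k = c/(N ρ_d(t_k)) and define E(c) := E[∫_{[0,1]^d} Δ(x)² dx]. Then E(c) = 3^{−d} − 2c·3^{−d} + c²·(C/N + 3^{−d}(N−1)/N), the map c ↦ E(c) attains its unique minimum over (0,∞) at c* = N/(N−1+3^d C), and E(c*) = c*·E(1) = c*·(C − 3^{−d})/N. -/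
open MeasureTheory

noncomputable def muI (d : ℕ) : Measure (Fin d → ℝ) := volume.restrict (Set.Icc (0 : Fin d → ℝ) 1)

noncomputable def Ind {d : ℕ} (t x : Fin d → ℝ) : ℝ := if ∀ j, t j < x j then (1 : ℝ) else 0

lemma muI_eq (d : ℕ) : muI d = Measure.pi (fun _ : Fin d => (volume : Measure ℝ).restrict (Set.Icc 0 1)) := by
  rw [muI, ← Measure.restrict_pi_pi, Set.pi_univ_Icc]; rfl

instance (d : ℕ) : IsProbabilityMeasure (muI d) := by
  have : IsProbabilityMeasure ((volume : Measure ℝ).restrict (Set.Icc 0 1)) := ⟨by simp⟩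
  rw [muI_eq]; infer_instance

lemma muN_eq (d N : ℕ) : (volume : Measure (Fin N → Fin d → ℝ)).restrict (Set.Icc 0 1) =
    Measure.pi (fun _ : Fin N => muI d) := by
  simp only [muI]
  rw [← Measure.restrict_pi_pi, Set.pi_univ_Icc]; rfl

lemma Ind_eq {d : ℕ} (t x : Fin d → ℝ) : Ind t x = ∏ j, (if t j < x j then (1 : ℝ) else 0) := by
  rw [Ind, Finset.prod_ite_zero]; simp

lemma ae_mem (d : ℕ) : ∀ᵐ x ∂(muI d), x ∈ Set.Icc (0 : Fin d → ℝ) 1 :=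
  ae_restrict_mem measurableSet_Icc

lemma int_Ind_right {d : ℕ} (t : Fin d → ℝ) (ht : t ∈ Set.Icc (0 : Fin d → ℝ) 1) :
    ∫ x, Ind t x ∂(muI d) = ∏ j, (1 - t j) := by
  simp only [Ind_eq, muI_eq]
  rw [integral_fintype_prod_eq_prod (f := fun j (y : ℝ) => if t j < y then (1 : ℝ) else 0)]
  refine Finset.prod_congr rfl fun j _ => ?_
  have h0 := ht.1 j
  have h1 := ht.2 j
  simp only [Pi.zero_apply, Pi.one_apply] at h0 h1
  have : (fun y : ℝ => if t j < y then (1 : ℝ) else 0) = (Set.Ioi (t j)).indicator 1 := by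
    ext y; simp [Set.indicator]
  rw [this, integral_indicator_one measurableSet_Ioi, measureReal_restrict_apply measurableSet_Ioi]
  have : Set.Ioi (t j) ∩ Set.Icc 0 1 = Set.Ioc (t j) 1 := by
    ext y; simp; grind
  rw [this]; simp [h1]

lemma int_Ind_left {d : ℕ} (x : Fin d → ℝ) (ht : x ∈ Set.Icc (0 : Fin d → ℝ) 1) :
    ∫ t, Ind t x ∂(muI d) = ∏ j, x j := by
  simp only [Ind_eq, muI_eq]
  rw [integral_fintype_prod_eq_prod (f := fun j (y : ℝ) => if y < x j then (1 : ℝ) else 0)]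
  refine Finset.prod_congr rfl fun j _ => ?_
  have h0 := ht.1 j
  have h1 := ht.2 j
  simp only [Pi.zero_apply, Pi.one_apply] at h0 h1
  have : (fun y : ℝ => if y < x j then (1 : ℝ) else 0) = (Set.Iio (x j)).indicator 1 := by
    ext y; simp [Set.indicator]
  rw [this, integral_indicator_one measurableSet_Iio, measureReal_restrict_apply measurableSet_Iio]
  have : Set.Iio (x j) ∩ Set.Icc 0 1 = Set.Ico 0 (x j) := by
    ext y; simp; grind
  rw [this]; simp [h0]

lemma int_sq (d : ℕ) : ∫ x, (∏ j, x j) ^ 2 ∂(muI d) = (3 : ℝ) ^ (-(d : ℤ)) := by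
  simp only [← Finset.prod_pow, muI_eq]
  rw [integral_fintype_prod_eq_prod (f := fun j (y : ℝ) => y ^ 2)]
  rw [integral_Icc_eq_integral_Ioc, ← intervalIntegral.integral_of_le zero_le_one]
  simp; norm_num

lemma meas_Ind {d : ℕ} : Measurable (fun p : (Fin d → ℝ) × (Fin d → ℝ) => Ind p.1 p.2) := by
  simp only [Ind_eq]
  refine Finset.measurable_prod _ fun j _ => ?_
  refine Measurable.ite ?_ measurable_const measurable_const
  exact measurableSet_lt (by fun_prop) (by fun_prop)

lemma Ind_nonneg {d : ℕ} (t x : Fin d → ℝ) : 0 ≤ Ind t x := by unfold Ind; split_ifs <;> simp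
lemma Ind_le {d : ℕ} (t x : Fin d → ℝ) : Ind t x ≤ 1 := by unfold Ind; split_ifs <;> simp
lemma Ind_sq {d : ℕ} (t x : Fin d → ℝ) : Ind t x * Ind t x = Ind t x := by unfold Ind; split_ifs <;> simp

noncomputable def PS {d N : ℕ} (ρ : (Fin d → ℝ) → ℝ) (S : Finset (Fin N)) (p : ℕ)
    (T : Fin N → Fin d → ℝ) (x : Fin d → ℝ) : ℝ :=
  (∏ m, if m ∈ S then Ind (T m) x else ρ (T m)) * (∏ j, x j) ^ p

lemma meas_PS {d N : ℕ} (ρ : (Fin d → ℝ) → ℝ) (hρ : Measurable ρ) (S : Finset (Fin N)) (p : ℕ) :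
    Measurable (fun q : (Fin N → Fin d → ℝ) × (Fin d → ℝ) => PS ρ S p q.1 q.2) := by
  unfold PS
  refine Measurable.mul ?_ (by fun_prop)
  refine Finset.measurable_prod _ fun m _ => ?_
  split_ifs
  · exact meas_Ind.comp (f := fun q : (Fin N → Fin d → ℝ) × (Fin d → ℝ) => (q.1 m, q.2)) (by fun_prop)
  · fun_prop

lemma PS_bound {d N : ℕ} (ρ : (Fin d → ℝ) → ℝ) (h0 : ∀ t, 0 ≤ ρ t) (S : Finset (Fin N)) (p : ℕ)
    (T : Fin N → Fin d → ℝ) (x : Fin d → ℝ) (hx : x ∈ Set.Icc (0 : Fin d → ℝ) 1) :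
    ‖PS ρ S p T x‖ ≤ ∏ m, if m ∈ S then 1 else ρ (T m) := by
  have hb0 : 0 ≤ ∏ j, x j := Finset.prod_nonneg fun j _ => hx.1 j
  have hb1 : ∏ j, x j ≤ 1 := Finset.prod_le_one (fun j _ => hx.1 j) fun j _ => hx.2 j
  have ha : 0 ≤ ∏ m, (if m ∈ S then Ind (T m) x else ρ (T m)) :=
    Finset.prod_nonneg fun m _ => by split_ifs; exacts [Ind_nonneg _ _, h0 _]
  unfold PS
  rw [Real.norm_of_nonneg (mul_nonneg ha (pow_nonneg hb0 _))]
  refine (mul_le_of_le_one_right ha (pow_le_one₀ hb0 hb1)).trans ?_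
  refine Finset.prod_le_prod (fun m _ => by split_ifs; exacts [Ind_nonneg _ _, h0 _]) fun m _ => ?_
  split_ifs; exacts [Ind_le _ _, le_rfl]

lemma PS_int_x {d N : ℕ} (ρ : (Fin d → ℝ) → ℝ) (hρ : Measurable ρ) (h0 : ∀ t, 0 ≤ ρ t)
    (S : Finset (Fin N)) (p : ℕ) (T : Fin N → Fin d → ℝ) :
    Integrable (PS ρ S p T) (muI d) := by
  refine Integrable.of_bound (C := ∏ m, if m ∈ S then 1 else ρ (T m)) ?_ ?_
  · exact ((meas_PS ρ hρ S p).comp (measurable_prodMk_left (x := T))).aestronglyMeasurable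
  · filter_upwards [ae_mem d] with x hx using PS_bound ρ h0 S p T x hx

lemma PS_int {d N : ℕ} (ρ : (Fin d → ℝ) → ℝ) (hρ : Measurable ρ) (h0 : ∀ t, 0 ≤ ρ t)
    (hi : Integrable ρ (muI d)) (S : Finset (Fin N)) (p : ℕ) :
    Integrable (Function.uncurry (PS ρ S p)) ((Measure.pi (fun _ : Fin N => muI d)).prod (muI d)) := by
  have h1 : Integrable (fun T : Fin N → Fin d → ℝ => ∏ m, (if m ∈ S then (fun _ => (1:ℝ)) else ρ) (T m))
      (Measure.pi (fun _ : Fin N => muI d)) := by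
    apply Integrable.fintype_prod
    intro m
    split_ifs
    · exact integrable_const _
    · exact hi
  refine (h1.comp_fst (muI d)).mono' (meas_PS ρ hρ S p).aestronglyMeasurable ?_
  have : ∀ᵐ q ∂((Measure.pi (fun _ : Fin N => muI d)).prod (muI d)), q.2 ∈ Set.Icc (0 : Fin d → ℝ) 1 :=
    Measure.quasiMeasurePreserving_snd.ae (ae_mem d)
  filter_upwards [this] with q hq
  refine (PS_bound ρ h0 S p q.1 q.2 hq).trans (le_of_eq ?_)
  refine Finset.prod_congr rfl fun m _ => ?_
  split_ifs <;> rfl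

lemma PS_val {d N : ℕ} (ρ : (Fin d → ℝ) → ℝ) (hρ : Measurable ρ) (h0 : ∀ t, 0 ≤ ρ t)
    (hi : Integrable ρ (muI d)) (h1 : ∫ t, ρ t ∂(muI d) = 1) (S : Finset (Fin N)) (p : ℕ)
    (hp : S.card + p = 2) :
    ∫ T, ∫ x, PS ρ S p T x ∂(muI d) ∂(Measure.pi (fun _ : Fin N => muI d)) = (3 : ℝ) ^ (-(d : ℤ)) := by
  rw [integral_integral_swap (PS_int ρ hρ h0 hi S p), ← int_sq]
  refine integral_congr_ae ?_
  filter_upwards [ae_mem d] with x hx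
  simp only [PS]
  rw [integral_mul_const]
  have : ∀ T : Fin N → Fin d → ℝ, (∏ m, if m ∈ S then Ind (T m) x else ρ (T m)) =
      ∏ m, (if m ∈ S then (fun t => Ind t x) else ρ) (T m) := by
    intro T
    refine Finset.prod_congr rfl fun m _ => ?_
    split_ifs <;> rfl
  simp only [this]
  rw [integral_fintype_prod_eq_prod]
  have : ∀ m, ∫ t, (if m ∈ S then (fun t => Ind t x) else ρ) t ∂(muI d) = if m ∈ S then ∏ j, x j else 1 := by
    intro m
    split_ifs
    · exact int_Ind_left x hx
    · exact h1
  simp only [this]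
  rw [Finset.prod_ite_mem]
  simp [← pow_add, hp]

lemma PS_eq {d N : ℕ} (ρ : (Fin d → ℝ) → ℝ) (S : Finset (Fin N)) (p : ℕ)
    (T : Fin N → Fin d → ℝ) (hT : ∀ m, 0 < ρ (T m)) (x : Fin d → ℝ) :
    PS ρ S p T x = (∏ m, ρ (T m)) * (∏ m ∈ S, Ind (T m) x / ρ (T m)) * (∏ j, x j) ^ p := by
  unfold PS
  congr 1
  have : ∀ m, (if m ∈ S then Ind (T m) x else ρ (T m)) =
      ρ (T m) * if m ∈ S then Ind (T m) x / ρ (T m) else 1 := by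
    intro m
    have := (hT m).ne'
    split_ifs
    · field_simp
    · simp
  simp only [this]
  rw [Finset.prod_mul_distrib, Finset.prod_ite_mem]
  simp

noncomputable def DK {d N : ℕ} (ρ : (Fin d → ℝ) → ℝ) (k : Fin N) (T : Fin N → Fin d → ℝ) : ℝ :=
  ∏ m, (if m = k then (fun t : Fin d → ℝ => (∏ j, (1 - t j)) / ρ t) else ρ) (T m)

lemma DK_eq {d N : ℕ} (ρ : (Fin d → ℝ) → ℝ) (k : Fin N)
    (T : Fin N → Fin d → ℝ) (hT : ∀ m, 0 < ρ (T m)) :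
    DK ρ k T = (∏ m, ρ (T m)) * ((∏ j, (1 - T k j)) / (ρ (T k) * ρ (T k))) := by
  unfold DK
  have : ∀ m, (if m = k then (fun t : Fin d → ℝ => (∏ j, (1 - t j)) / ρ t) else ρ) (T m) =
      ρ (T m) * if m = k then (∏ j, (1 - T k j)) / (ρ (T k) * ρ (T k)) else 1 := by
    intro m
    have := (hT m).ne'
    split_ifs with h
    · subst h; field_simp
    · simp
  simp only [this]
  rw [Finset.prod_mul_distrib, Finset.prod_ite_eq']
  simp

lemma DK_int {d N : ℕ} (ρ : (Fin d → ℝ) → ℝ) (k : Fin N) 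
    (hi : Integrable ρ (muI d)) (hC : Integrable (fun t : Fin d → ℝ => (∏ j, (1 - t j)) / ρ t) (muI d)) :
    Integrable (DK ρ k) (Measure.pi (fun _ : Fin N => muI d)) := by
  apply Integrable.fintype_prod
  intro m
  split_ifs
  · exact hC
  · exact hi

lemma DK_val {d N : ℕ} (ρ : (Fin d → ℝ) → ℝ) (k : Fin N) 
    (h1 : ∫ t, ρ t ∂(muI d) = 1) :
    ∫ T, DK ρ k T ∂(Measure.pi (fun _ : Fin N => muI d)) =
      ∫ t : Fin d → ℝ, (∏ j, (1 - t j)) / ρ t ∂(muI d) := by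
  unfold DK
  rw [integral_fintype_prod_eq_prod]
  rw [Finset.prod_eq_single k]
  · simp
  · intro m _ hm
    simpa [hm] using h1
  · simp

noncomputable def FK {d N : ℕ} (ρ : (Fin d → ℝ) → ℝ) (k l : Fin N) (T : Fin N → Fin d → ℝ) : ℝ :=
  if k = l then DK ρ k T else ∫ x, PS ρ {k, l} 0 T x ∂(muI d)

lemma int_three {α : Type*} [MeasurableSpace α] (μ : Measure α) (f g h : α → ℝ)
    (hf : Integrable f μ) (hg : Integrable g μ) (hh : Integrable h μ) :
    ∫ x, (f x - g x + h x) ∂μ = ∫ x, f x ∂μ - ∫ x, g x ∂μ + ∫ x, h x ∂μ := by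
  have := integral_add (hf.sub hg) hh
  simp only [Pi.sub_apply] at this
  rw [this, integral_sub hf hg]

lemma inner_eq {d N : ℕ} (ρ : (Fin d → ℝ) → ℝ) (hρ : Measurable ρ) (h0 : ∀ t, 0 ≤ ρ t)
    (c : ℝ) (T : Fin N → Fin d → ℝ) (hT : ∀ m, 0 < ρ (T m))
    (hTm : ∀ m, T m ∈ Set.Icc (0 : Fin d → ℝ) 1) :
    (∏ k, ρ (T k)) * ∫ x, ((∑ k, (c / (N * ρ (T k))) * Ind (T k) x) - ∏ j, x j) ^ 2 ∂(muI d) =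
    (∑ k, ∑ l, (c / N) ^ 2 * FK ρ k l T) - (∑ k : Fin N, 2 * (c / N) * ∫ x, PS ρ {k} 1 T x ∂(muI d))
      + ∫ x, PS ρ (∅ : Finset (Fin N)) 2 T x ∂(muI d) := by
  set W := ∏ k, ρ (T k) with hW
  let G : Fin N → Fin N → (Fin d → ℝ) → ℝ := fun k l x =>
    if k = l then W / (ρ (T k) * ρ (T k)) * Ind (T k) x else PS ρ {k, l} 0 T x
  have hIm : ∀ t : Fin d → ℝ, Integrable (fun x => Ind t x) (muI d) := by
    intro t
    refine Integrable.of_bound (C := 1) (meas_Ind.comp (measurable_prodMk_left (x := t))).aestronglyMeasurable ?_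
    refine Filter.Eventually.of_forall fun x => ?_
    rw [Real.norm_of_nonneg (Ind_nonneg _ _)]; exact Ind_le _ _
  have hG : ∀ k l, Integrable (G k l) (muI d) := by
    intro k l
    by_cases h : k = l
    · simp only [G, h, if_true]; exact (hIm _).const_mul _
    · simp only [G, h, if_false]; exact PS_int_x ρ hρ h0 _ _ T
  have hGF : ∀ k l, ∫ x, G k l x ∂(muI d) = FK ρ k l T := by
    intro k l
    by_cases h : k = l
    · simp only [G, FK, h, if_true]
      rw [integral_const_mul, int_Ind_right _ (hTm _), DK_eq ρ _ T hT]
      ring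
    · simp only [G, FK, h, if_false]
  have hpt : ∀ x, W * ((∑ k, (c / (N * ρ (T k))) * Ind (T k) x) - ∏ j, x j) ^ 2 =
      (∑ k, ∑ l, (c / N) ^ 2 * G k l x) - (∑ k : Fin N, 2 * (c / N) * PS ρ {k} 1 T x)
      + PS ρ (∅ : Finset (Fin N)) 2 T x := by
    intro x
    have hGx : ∀ k l, G k l x = W * ((Ind (T k) x / ρ (T k)) * (Ind (T l) x / ρ (T l))) := by
      intro k l
      by_cases h : k = l
      · subst h
        simp only [G, if_true]
        rw [div_mul_div_comm, Ind_sq]; ring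
      · simp only [G, h, if_false]
        rw [PS_eq ρ _ _ T hT, Finset.prod_pair h]; ring
    simp only [hGx, PS_eq ρ _ _ T hT, Finset.prod_singleton, Finset.prod_empty]
    rw [← hW, sub_sq, sq (∑ k, _), Finset.sum_mul_sum]
    rw [mul_add, mul_sub, Finset.mul_sum, Finset.mul_sum, Finset.sum_mul, Finset.mul_sum]
    congr 1
    · congr 1
      · refine Finset.sum_congr rfl fun k _ => ?_
        rw [Finset.mul_sum]
        refine Finset.sum_congr rfl fun l _ => ?_
        simp only [div_eq_mul_inv, mul_inv]; ring
      · refine Finset.sum_congr rfl fun k _ => ?_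
        simp only [div_eq_mul_inv, mul_inv]; ring
    · ring
  rw [← integral_const_mul]
  simp only [hpt]
  have i1 : ∀ k ∈ Finset.univ, Integrable (fun x => ∑ l, (c / N) ^ 2 * G k l x) (muI d) := fun k _ =>
    integrable_finsetSum _ fun l _ => (hG k l).const_mul _
  have i2 : ∀ k ∈ Finset.univ, Integrable (fun x => 2 * (c / N) * PS ρ {k} 1 T x) (muI d) := fun k _ =>
    (PS_int_x ρ hρ h0 _ _ T).const_mul _
  rw [int_three _ _ _ _ (integrable_finsetSum _ i1) (integrable_finsetSum _ i2) (PS_int_x ρ hρ h0 _ _ T),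
    integral_finsetSum _ i1, integral_finsetSum _ i2]
  congr 2
  · refine Finset.sum_congr rfl fun k _ => ?_
    rw [integral_finsetSum _ fun l _ => (hG k l).const_mul _]
    simp only [integral_const_mul, hGF]
  · simp only [integral_const_mul]

theorem formula
    (d N : ℕ) (hN : 1 ≤ N)
    (ρd : (Fin d → ℝ) → ℝ)
    (hmeas : Measurable ρd)
    (hnonneg : ∀ t, 0 ≤ ρd t)
    (hprob : ∫ t, ρd t ∂(muI d) = 1)
    (hpos : ∀ᵐ t ∂(muI d), 0 < ρd t)
    (hint : Integrable (fun t : Fin d → ℝ => (∏ j, (1 - t j)) / ρd t) (muI d))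
    (C : ℝ)
    (hC : C = ∫ t, (∏ j, (1 - t j)) / ρd t ∂(muI d)) (c : ℝ) :
    ∫ T, (∏ k, ρd (T k)) *
          ∫ x, ((∑ k, (c / (N * ρd (T k))) * Ind (T k) x) - ∏ j, x j) ^ 2 ∂(muI d)
          ∂(Measure.pi (fun _ : Fin N => muI d)) = 
    (3 : ℝ) ^ (-(d : ℤ)) - 2 * c * (3 : ℝ) ^ (-(d : ℤ))
        + c ^ 2 * (C / N + (3 : ℝ) ^ (-(d : ℤ)) * ((N : ℝ) - 1) / N) := by
  have hi : Integrable ρd (muI d) := by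
    by_contra h
    rw [integral_undef h] at hprob; norm_num at hprob
  have hae : ∀ᵐ T ∂(Measure.pi (fun _ : Fin N => muI d)), ∀ m, 0 < ρd (T m) ∧ T m ∈ Set.Icc (0 : Fin d → ℝ) 1 := by
    rw [ae_all_iff]
    intro m
    exact (Measure.tendsto_eval_ae_ae (μ := fun _ : Fin N => muI d) (i := m)).eventually (hpos.and (ae_mem d))
  rw [integral_congr_ae (g := fun T => (∑ k, ∑ l, (c / N) ^ 2 * FK ρd k l T) - (∑ k : Fin N, 2 * (c / N) * ∫ x, PS ρd {k} 1 T x ∂(muI d))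
      + ∫ x, PS ρd (∅ : Finset (Fin N)) 2 T x ∂(muI d))
    (by filter_upwards [hae] with T hT using inner_eq ρd hmeas hnonneg c T (fun m => (hT m).1) (fun m => (hT m).2))]
  have hF : ∀ k l, Integrable (FK ρd k l) (Measure.pi (fun _ : Fin N => muI d)) := by
    intro k l
    unfold FK
    by_cases h : k = l
    · simp only [h, if_true]; exact DK_int ρd _ hi hint
    · simp only [h, if_false]; exact (PS_int ρd hmeas hnonneg hi _ _).integral_prod_left
  have hFv : ∀ k l, ∫ T, FK ρd k l T ∂(Measure.pi (fun _ : Fin N => muI d)) = (if k = l then C - (3 : ℝ) ^ (-(d : ℤ)) else 0) + (3 : ℝ) ^ (-(d : ℤ)) := by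
    intro k l
    unfold FK
    by_cases h : k = l
    · simp only [h, if_true]; rw [DK_val ρd _ hprob, hC]; ring
    · simp only [h, if_false]; rw [PS_val ρd hmeas hnonneg hprob (hi := hi)]
      · simp
      · simp [Finset.card_pair h]
  have i1 : ∀ k ∈ Finset.univ, Integrable (fun T => ∑ l, (c / N) ^ 2 * FK ρd k l T) (Measure.pi (fun _ : Fin N => muI d)) := fun k _ =>
    integrable_finsetSum _ fun l _ => (hF k l).const_mul _
  have i2 : ∀ k ∈ Finset.univ, Integrable (fun T => 2 * (c / N) * ∫ x, PS ρd {k} 1 T x ∂(muI d)) (Measure.pi (fun _ : Fin N => muI d)) := fun k _ =>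
    (PS_int ρd hmeas hnonneg hi _ _).integral_prod_left.const_mul _
  have i3 : Integrable (fun T => ∫ x, PS ρd (∅ : Finset (Fin N)) 2 T x ∂(muI d)) (Measure.pi (fun _ : Fin N => muI d)) :=
    (PS_int ρd hmeas hnonneg hi _ _).integral_prod_left
  rw [int_three _ _ _ _ (integrable_finsetSum _ i1) (integrable_finsetSum _ i2) i3,
    integral_finsetSum _ i1, integral_finsetSum _ i2]
  have e1 : ∀ k, ∫ T, ∑ l, (c / N) ^ 2 * FK ρd k l T ∂(Measure.pi (fun _ : Fin N => muI d)) =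
      (c / N) ^ 2 * (C - (3 : ℝ) ^ (-(d : ℤ)) + N * (3 : ℝ) ^ (-(d : ℤ))) := by
    intro k
    rw [integral_finsetSum _ fun l _ => (hF k l).const_mul _]
    simp only [integral_const_mul, hFv]
    rw [← Finset.mul_sum, Finset.sum_add_distrib]
    simp
  simp only [e1, integral_const_mul]
  rw [PS_val ρd hmeas hnonneg hi hprob _ _ (by simp)]
  have e2 : ∀ k : Fin N, ∫ T, ∫ x, PS ρd {k} 1 T x ∂(muI d) ∂(Measure.pi (fun _ : Fin N => muI d)) = (3 : ℝ) ^ (-(d : ℤ)) :=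
    fun k => PS_val ρd hmeas hnonneg hi hprob _ _ (by simp)
  simp only [e2]
  have : (N : ℝ) ≠ 0 := by positivity
  simp only [Finset.sum_const, Finset.card_univ, Fintype.card_fin, nsmul_eq_mul]
  generalize (3 : ℝ) ^ (-(d : ℤ)) = z
  field_simp
  ring



/-- For weights `a_k = c/(N ρd(t_k))` the expected squared
discrepancy `E(c)` equals `3^{-d} - 2c 3^{-d} + c²(C/N + 3^{-d}(N-1)/N)`, it
attains its unique minimum over `(0,∞)` at `c* = N/(N-1+3^d C)`, and
`E(c*) = c*·(C - 3^{-d})/N`. -/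
theorem optimal_constant_rescaling
    (d N : ℕ) (hN : 1 ≤ N)
    (ρd : (Fin d → ℝ) → ℝ)
    (hmeas : Measurable ρd)
    (hnonneg : ∀ t, 0 ≤ ρd t)
    (hprob : ∫ t in Set.Icc (0 : Fin d → ℝ) 1, ρd t = 1)
    (hpos : ∀ᵐ t ∂(volume.restrict (Set.Icc (0 : Fin d → ℝ) 1)), 0 < ρd t)
    (hint : IntegrableOn (fun t : Fin d → ℝ => (∏ j, (1 - t j)) / ρd t)
      (Set.Icc (0 : Fin d → ℝ) 1))
    (C : ℝ)
    (hC : C = ∫ t in Set.Icc (0 : Fin d → ℝ) 1, (∏ j, (1 - t j)) / ρd t)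
    (Ef : ℝ → ℝ)
    (hEf : ∀ c : ℝ, Ef c = ∫ T in Set.Icc (0 : Fin N → Fin d → ℝ) 1,
        (∏ k, ρd (T k)) *
          ∫ x in Set.Icc (0 : Fin d → ℝ) 1,
            ((∑ k, (c / (N * ρd (T k))) *
                (if ∀ j, T k j < x j then (1 : ℝ) else 0)) - ∏ j, x j) ^ 2)
    (cstar : ℝ)
    (hcstar : cstar = N / ((N : ℝ) - 1 + 3 ^ d * C)) :
    (∀ c : ℝ, Ef c = (3 : ℝ) ^ (-(d : ℤ)) - 2 * c * (3 : ℝ) ^ (-(d : ℤ))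
        + c ^ 2 * (C / N + (3 : ℝ) ^ (-(d : ℤ)) * ((N : ℝ) - 1) / N)) ∧
    0 < cstar ∧
    (∀ c : ℝ, 0 < c → c ≠ cstar → Ef cstar < Ef c) ∧
    Ef cstar = cstar * ((C - (3 : ℝ) ^ (-(d : ℤ))) / N) := by
  have hpos' : ∀ᵐ t ∂(muI d), 0 < ρd t := hpos
  have hCpos : 0 < C := by
    rw [hC]
    have hprod : ∀ᵐ t ∂(muI d), ∀ j, t j < 1 := by
      rw [ae_all_iff]
      intro j
      rw [muI_eq]
      refine (Measure.tendsto_eval_ae_ae (μ := fun _ : Fin d => (volume : Measure ℝ).restrict (Set.Icc 0 1)) (i := j)).eventually (p := fun y => y < 1) ?_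
      rw [← restrict_Ico_eq_restrict_Icc]
      filter_upwards [ae_restrict_mem measurableSet_Ico] with y hy using hy.2
    have hp : ∀ᵐ t ∂(muI d), 0 < (∏ j, (1 - t j)) / ρd t := by
      filter_upwards [hprod, hpos'] with t h1 h2
      exact div_pos (Finset.prod_pos fun j _ => sub_pos.2 (h1 j)) h2
    change 0 < ∫ t, (∏ j, (1 - t j)) / ρd t ∂(muI d)
    rw [integral_pos_iff_support_of_nonneg_ae (hp.mono fun t h => h.le) hint]
    rw [pos_iff_ne_zero]
    intro h
    have h2 : ∀ᵐ t ∂(muI d), t ∉ Function.support (fun t : Fin d → ℝ => (∏ j, (1 - t j)) / ρd t) :=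
      measure_eq_zero_iff_ae_notMem.1 h
    obtain ⟨t, ht1, ht2⟩ := (hp.and h2).exists
    exact ht2 ht1.ne'
  have hform : ∀ c : ℝ, Ef c = (3 : ℝ) ^ (-(d : ℤ)) - 2 * c * (3 : ℝ) ^ (-(d : ℤ))
        + c ^ 2 * (C / N + (3 : ℝ) ^ (-(d : ℤ)) * ((N : ℝ) - 1) / N) := by
    intro c
    rw [hEf c, muN_eq]
    exact formula d N hN ρd hmeas hnonneg hprob hpos hint C hC c
  have hN1 : (1 : ℝ) ≤ N := by exact_mod_cast hN
  have h3 : (0 : ℝ) < 3 ^ d := by positivity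
  have hD : 0 < (N : ℝ) - 1 + 3 ^ d * C := by
    have := mul_pos h3 hCpos
    linarith
  have hcpos : 0 < cstar := by rw [hcstar]; positivity
  have hz : (3 : ℝ) ^ (-(d : ℤ)) = (3 ^ d)⁻¹ := by simp
  have hA : C / N + (3 : ℝ) ^ (-(d : ℤ)) * ((N : ℝ) - 1) / N = (3 ^ d)⁻¹ / cstar := by
    rw [hz, hcstar]; field_simp; ring
  refine ⟨hform, hcpos, ?_, ?_⟩
  · intro c _ hne
    rw [hform, hform, hA, hz]
    have h : 0 < ((3 : ℝ) ^ d)⁻¹ / cstar * (c - cstar) ^ 2 :=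
      mul_pos (by positivity) (pow_pos (abs_pos.2 (sub_ne_zero.2 hne)) 2 |>.trans_eq (sq_abs _))
    have e : ((3 : ℝ) ^ d)⁻¹ / cstar * (c - cstar) ^ 2 =
      c ^ 2 * ((3 ^ d)⁻¹ / cstar) - 2 * c * (3 ^ d)⁻¹ + 2 * cstar * (3 ^ d)⁻¹ - cstar ^ 2 * ((3 ^ d)⁻¹ / cstar) := by
      field_simp; ring
    linarith
  · rw [hform]
    have e : (C - (3 : ℝ) ^ (-(d : ℤ))) / N = (3 ^ d)⁻¹ / cstar - (3 ^ d)⁻¹ := by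
      rw [← hA, hz]; field_simp; ring
    rw [e, hA, hz]; field_simp; ring
end

section
/- Let p ∈ [1,∞), d ∈ ℕ, and let ρ_d be a measurable probability density on [0,1]^d with 0 < c_0 ≤ ρ_d(t) for almost every t ∈ [0,1]^d (some constant c_0). Let t_1,…,t_N be i.i.d. with law ρ_d(t)dt and weights a_k = 1/(N ρ_d(t_k)). Then lim_{N→∞} N^{p/2} · E[∫_{[0,1]^d} |Δ(x)|^p dx] = (2^{p/2}/√π) · Γ((p+1)/2) · ∫_{[0,1]^d} ( ∫_{[0,1]^d} 1_{[0,x)}(t)/ρ_d(t) dt − (x_1⋯x_d)² )^{p/2} dx. -/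
open MeasureTheory Filter
open ProbabilityTheory

lemma gauss_abs_moment (p : ℝ) (hp : 1 ≤ p) (v : NNReal) :
    ∫ s, |s| ^ p ∂(gaussianReal 0 v) =
      (2 : ℝ) ^ (p / 2) / Real.sqrt Real.pi * Real.Gamma ((p + 1) / 2) * (v : ℝ) ^ (p / 2) := by
  by_cases hv : v = 0
  · subst hv
    have h1 : (0:ℝ) ^ p = 0 := Real.zero_rpow (by linarith)
    have h2 : (0:ℝ) ^ (p/2) = 0 := Real.zero_rpow (by linarith)
    simp [gaussianReal_zero_var, h1, h2]
  have hv' : (0:ℝ) < v := by positivity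
  rw [integral_gaussianReal_eq_integral_smul hv]
  have h := integral_rpow_mul_exp_neg_mul_rpow (p := 2) (q := p) (b := (2 * (v:ℝ))⁻¹)
    (by norm_num) (by linarith) (by positivity)
  have h2 := integral_comp_abs (f := fun x => (Real.sqrt (2 * Real.pi * v))⁻¹ *
    (x ^ p * Real.exp (-(2 * (v:ℝ))⁻¹ * x ^ (2:ℝ))))
  rw [integral_const_mul, integral_const_mul, h] at h2
  have e : ∀ x : ℝ, gaussianPDFReal 0 v x • |x| ^ p = (Real.sqrt (2 * Real.pi * v))⁻¹ *
    (|x| ^ p * Real.exp (-(2 * (v:ℝ))⁻¹ * |x| ^ (2:ℝ))) := by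
    intro x
    simp only [gaussianPDFReal, smul_eq_mul, sub_zero, Real.rpow_two, sq_abs]
    rw [show -(2 * (v:ℝ))⁻¹ * x ^ 2 = -x ^ 2 / (2 * v) by field_simp]
    ring
  simp_rw [e]
  rw [integral_const_mul, h2]
  have hb : ((2 * (v:ℝ))⁻¹) ^ (-(p+1)/2) = 2 ^ (p/2) * (v:ℝ) ^ (p/2) * Real.sqrt (2 * v) := by
    rw [Real.inv_rpow (by positivity), ← Real.rpow_neg (by positivity),
      ← Real.mul_rpow (by norm_num) hv'.le, Real.sqrt_eq_rpow, ← Real.rpow_add (by positivity)]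
    congr 1; ring
  rw [hb, show 2 * Real.pi * (v:ℝ) = (2 * v) * Real.pi by ring, Real.sqrt_mul (by positivity)]
  have : Real.sqrt (2 * v) ≠ 0 := by positivity
  have : Real.sqrt Real.pi ≠ 0 := by positivity
  field_simp

lemma rpow_le_exp (q : ℝ) (hq : 0 ≤ q) : ∃ K : ℝ, 0 < K ∧ ∀ s : ℝ, |s| ^ q ≤ K * (Real.exp (1 * s) + Real.exp ((-1) * s)) := by
  refine ⟨1 + (⌈q⌉₊.factorial : ℝ), by positivity, fun s => ?_⟩
  have hs := abs_nonneg s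
  have h1 : |s| ^ q ≤ 1 + |s| ^ ⌈q⌉₊ := by
    rcases le_total |s| 1 with h | h
    · have := Real.rpow_le_one hs h hq
      have : 0 ≤ |s| ^ ⌈q⌉₊ := by positivity
      linarith
    · have := Real.rpow_le_rpow_of_exponent_le h (Nat.le_ceil q)
      rw [Real.rpow_natCast] at this
      linarith
  have h2 := Real.pow_div_factorial_le_exp |s| hs ⌈q⌉₊
  rw [div_le_iff₀ (by positivity)] at h2
  have h3 := Real.one_le_exp hs
  have h4 : Real.exp |s| ≤ Real.exp (1 * s) + Real.exp ((-1) * s) := by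
    rcases abs_cases s with ⟨h, _⟩ | ⟨h, _⟩ <;> rw [h]
    · have := Real.exp_pos ((-1) * s); simp at *; linarith
    · have := Real.exp_pos (1 * s); simp at *; linarith
  have hf : (0:ℝ) < ⌈q⌉₊.factorial := by positivity
  calc _ ≤ (1 + (⌈q⌉₊.factorial : ℝ)) * Real.exp |s| := by nlinarith
    _ ≤ _ := by gcongr

lemma subG_moment (q : ℝ) (hq : 0 ≤ q) (c : NNReal) : ∃ B : ℝ, 0 ≤ B ∧ 
    ∀ {Ω : Type} [MeasurableSpace Ω] (P : Measure Ω) (S : Ω → ℝ), HasSubgaussianMGF S c P → 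
      Integrable (fun ω => |S ω| ^ q) P ∧ ∫ ω, |S ω| ^ q ∂P ≤ B := by
  obtain ⟨K, hK, h⟩ := rpow_le_exp q hq
  refine ⟨K * (Real.exp (c/2) + Real.exp (c/2)), by positivity, ?_⟩
  intro Ω _ P S hS
  have i1 := hS.integrable_exp_mul 1
  have i2 := hS.integrable_exp_mul (-1)
  have I := (i1.add i2).const_mul K
  have I0 : Integrable (fun ω => |S ω| ^ q) P := by
    refine I.mono' ?_ (ae_of_all _ fun ω => ?_)
    · have := hS.aemeasurable
      exact (by fun_prop : AEMeasurable (fun ω => |S ω| ^ q) P).aestronglyMeasurable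
    · rw [Real.norm_of_nonneg (by positivity)]
      exact h _
  refine ⟨I0, ?_⟩
  refine (integral_mono I0 I fun ω => h _).trans ?_
  rw [integral_const_mul]
  gcongr
  simp only [Pi.add_apply]
  rw [integral_add i1 i2]
  have m1 := hS.mgf_le 1
  have m2 := hS.mgf_le (-1)
  simp only [mgf] at m1 m2
  norm_num at m1 m2 ⊢
  linarith

lemma tendsto_moment {Ω Ω' : Type} [MeasurableSpace Ω] [MeasurableSpace Ω'] (P : Measure Ω) (P' : Measure Ω')
    [IsProbabilityMeasure P] [IsProbabilityMeasure P'] (X : ℕ → Ω → ℝ) (Z : Ω' → ℝ) (c : NNReal)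
    (hX : ∀ n, HasSubgaussianMGF (X n) c P) (hZ : HasSubgaussianMGF Z c P')
    (h : TendstoInDistribution X atTop Z (fun _ => P) P') (p : ℝ) (hp : 1 ≤ p) :
    Tendsto (fun n => ∫ ω, |X n ω| ^ p ∂P) atTop (nhds (∫ ω, |Z ω| ^ p ∂P')) := by
  obtain ⟨_, _, hB1⟩ := subG_moment p (by linarith) c
  obtain ⟨B, hB0, hB⟩ := subG_moment (2 * p) (by linarith) c
  have key : ∀ {Ω : Type} [MeasurableSpace Ω] (P : Measure Ω) (_ : IsProbabilityMeasure P) (S : Ω → ℝ),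
      HasSubgaussianMGF S c P → ∀ M : ℝ, 0 < M →
      |∫ ω, |S ω| ^ p ∂P - ∫ ω, min (|S ω| ^ p) M ∂P| ≤ B / M := by
    intro Ω _ P _ S hS M hM
    obtain ⟨I, hI⟩ := hB P S hS
    obtain ⟨J, _⟩ := hB1 P S hS
    have J2 : Integrable (fun ω => min (|S ω| ^ p) M) P := J.inf (integrable_const M)
    rw [← integral_sub J J2]
    calc _ ≤ ∫ ω, ‖|S ω| ^ p - min (|S ω| ^ p) M‖ ∂P := norm_integral_le_integral_norm _
      _ ≤ ∫ ω, |S ω| ^ (2 * p) / M ∂P := by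
        refine integral_mono (J.sub J2).norm (I.div_const M) fun ω => ?_
        have e : |S ω| ^ (2 * p) = (|S ω| ^ p) ^ 2 := by
          rw [mul_comm, Real.rpow_mul (abs_nonneg _), Real.rpow_two]
        simp only [e]
        have : 0 ≤ |S ω| ^ p := by positivity
        rw [le_div_iff₀ hM]
        rcases le_total (|S ω| ^ p) M with h | h
        · simp [min_eq_left h]; positivity
        · rw [min_eq_right h, Real.norm_of_nonneg (by linarith)]; nlinarith
      _ ≤ _ := by rw [integral_div]; gcongr
  have hw : ∀ M : ℝ, 0 < M → Tendsto (fun n => ∫ ω, min (|X n ω| ^ p) M ∂P) atTop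
      (nhds (∫ ω, min (|Z ω| ^ p) M ∂P')) := by
    intro M hM
    have hc : Continuous fun s : ℝ => min (|s| ^ p) M :=
      (continuous_abs.rpow_const fun _ => Or.inr (by linarith)).min continuous_const
    let f : BoundedContinuousFunction ℝ ℝ := BoundedContinuousFunction.ofNormedAddCommGroup
      (fun s : ℝ => min (|s| ^ p) M) hc M (fun s => by
        rw [Real.norm_of_nonneg (le_min (by positivity) hM.le)]; exact min_le_right _ _)
    have := (ProbabilityMeasure.tendsto_iff_forall_integral_tendsto.1 h.tendsto) f
    simp only [ProbabilityMeasure.coe_mk] at this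
    rw [integral_map h.aemeasurable_limit f.continuous.aestronglyMeasurable] at this
    refine this.congr fun n => ?_
    rw [integral_map (h.forall_aemeasurable n) f.continuous.aestronglyMeasurable]
    rfl
  rw [Metric.tendsto_atTop]
  intro ε hε
  set M := 3 * (B + 1) / ε with hMdef
  have hM : 0 < M := by positivity
  have hBM : B / M < ε / 3 := by
    rw [hMdef, div_lt_iff₀ (by positivity)]; field_simp; linarith
  obtain ⟨N, hN⟩ := Metric.tendsto_atTop.1 (hw M hM) (ε/3) (by positivity)
  refine ⟨N, fun n hn => ?_⟩
  have a := key P inferInstance _ (hX n) M hM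
  have b := key P' inferInstance _ hZ M hM
  have d := hN n hn
  rw [Real.dist_eq] at d ⊢
  rw [abs_le] at a b
  rw [abs_lt] at d ⊢
  constructor <;> linarith

lemma subG_mono {Ω : Type} [MeasurableSpace Ω] {P : Measure Ω} {S : Ω → ℝ} {c c' : NNReal}
    (h : HasSubgaussianMGF S c P) (hc : c ≤ c') : HasSubgaussianMGF S c' P :=
  ⟨h.integrable_exp_mul, fun t => (h.mgf_le t).trans (by gcongr)⟩

lemma iid_subG {Ω : Type} [MeasurableSpace Ω] (P : Measure Ω) [IsProbabilityMeasure P]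
    (X : ℕ → Ω → ℝ) (hindep : iIndepFun X P) (hid : ∀ i, IdentDistrib (X i) (X 0) P P)
    (b : ℝ) (hb : ∀ i, ∀ᵐ ω ∂P, X i ω ∈ Set.Icc 0 b) (n : ℕ) :
    HasSubgaussianMGF (fun ω => (√n)⁻¹ * (∑ k ∈ Finset.range n, X k ω - n * P[X 0]))
      ((‖b - 0‖₊ / 2) ^ 2) P := by
  have h1 : ∀ i, HasSubgaussianMGF (fun ω => X i ω - P[X 0]) ((‖b - 0‖₊ / 2) ^ 2) P := by
    intro i
    have := hasSubgaussianMGF_of_mem_Icc (hid i).aemeasurable_fst (hb i)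
    rwa [(hid i).integral_eq] at this
  have h2 : iIndepFun (fun i ω => X i ω - P[X 0]) P :=
    hindep.comp (fun _ s => s - ∫ ω, X 0 ω ∂P) (fun _ => by fun_prop)
  have h3 := (HasSubgaussianMGF.sum_of_iIndepFun h2 (s := Finset.range n)
    (fun i _ => h1 i)).const_mul (√n)⁻¹
  simp only [Finset.sum_sub_distrib, Finset.sum_const, Finset.card_range, nsmul_eq_mul] at h3
  refine subG_mono h3 ?_
  rw [← NNReal.coe_le_coe]
  change (√n)⁻¹ ^ 2 * (((n : NNReal) * (‖b - 0‖₊ / 2) ^ 2 : NNReal) : ℝ) ≤ _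
  rw [NNReal.coe_mul, NNReal.coe_natCast, inv_pow, Real.sq_sqrt (by positivity), ← mul_assoc]
  refine mul_le_of_le_one_left (by positivity) ?_
  exact inv_mul_le_one

lemma iid_tendsto {Ω : Type} [MeasurableSpace Ω] (P : Measure Ω) [IsProbabilityMeasure P]
    (X : ℕ → Ω → ℝ) (hindep : iIndepFun X P) (hid : ∀ i, IdentDistrib (X i) (X 0) P P)
    (b : ℝ) (hb : ∀ i, ∀ᵐ ω ∂P, X i ω ∈ Set.Icc 0 b) (p : ℝ) (hp : 1 ≤ p) :
    Tendsto (fun n : ℕ => ∫ ω, |(√n)⁻¹ * (∑ k ∈ Finset.range n, X k ω - n * P[X 0])| ^ p ∂P) atTop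
      (nhds ((2 : ℝ) ^ (p / 2) / Real.sqrt Real.pi * Real.Gamma ((p + 1) / 2) *
        (Var[X 0; P]) ^ (p / 2))) := by
  have hY : HasLaw (fun s : ℝ => s) (gaussianReal 0 Var[X 0; P].toNNReal) (gaussianReal 0 Var[X 0; P].toNNReal) :=
    ⟨by fun_prop, by simp⟩
  have hL : MemLp (X 0) 2 P := memLp_of_bounded (hb 0) (hid 0).aemeasurable_fst.aestronglyMeasurable 2
  have hT := tendstoInDistribution_inv_sqrt_mul_sum_sub hY hL hindep hid
  have hZ : HasSubgaussianMGF (fun s : ℝ => s) (Var[X 0; P].toNNReal) (gaussianReal 0 Var[X 0; P].toNNReal) :=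
    ⟨integrable_exp_mul_gaussianReal, fun t => by rw [mgf_fun_id_gaussianReal]; simp⟩
  have := tendsto_moment P _ _ _ (((‖b - 0‖₊ / 2) ^ 2) ⊔ Var[X 0; P].toNNReal)
    (fun n => subG_mono (iid_subG P X hindep hid b hb n) le_sup_left) (subG_mono hZ le_sup_right) hT p hp
  rw [gauss_abs_moment p hp, Real.coe_toNNReal _ (variance_nonneg _ _)] at this
  exact this

lemma pi_withDens {E : Type} [MeasurableSpace E] (ν : Measure E) [IsProbabilityMeasure ν]
    (f : E → ENNReal) (hf : Measurable f) [IsProbabilityMeasure (ν.withDensity f)] (N : ℕ) :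
    Measure.pi (fun _ : Fin N => ν.withDensity f) =
      (Measure.pi (fun _ : Fin N => ν)).withDensity (fun T => ∏ k, f (T k)) := by
  refine Measure.pi_eq fun s hs => ?_
  have hm := MeasurableSet.univ_pi hs
  rw [withDensity_apply _ hm, ← lintegral_indicator hm]
  have e : ∀ T : Fin N → E, (Set.univ.pi s).indicator (fun T => ∏ k, f (T k)) T =
      ∏ k, (s k).indicator f (T k) := by
    intro T
    by_cases h : T ∈ Set.univ.pi s
    · rw [Set.indicator_of_mem h]
      exact Finset.prod_congr rfl fun k _ => (Set.indicator_of_mem (h k trivial) _).symm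
    · rw [Set.indicator_of_notMem h]
      simp only [Set.mem_pi, Set.mem_univ, true_imp_iff, not_forall] at h
      obtain ⟨k, hk⟩ := h
      exact (Finset.prod_eq_zero (Finset.mem_univ k) (Set.indicator_of_notMem hk _)).symm
  simp_rw [e]
  have hi : iIndepFun (fun (k : Fin N) (T : Fin N → E) => (s k).indicator f (T k))
      (Measure.pi (fun _ : Fin N => ν)) :=
    iIndepFun_pi (X := fun k => (s k).indicator f) fun k => (hf.indicator (hs k)).aemeasurable
  rw [lintegral_prod_eq_prod_lintegral_of_indepFun _ _ hi
    (fun k => (hf.indicator (hs k)).comp (measurable_pi_apply k))]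
  refine Finset.prod_congr rfl fun k _ => ?_
  rw [withDensity_apply _ (hs k), ← lintegral_indicator (hs k)]
  exact (measurePreserving_eval (fun _ : Fin N => ν) k).lintegral_comp (hf.indicator (hs k))

lemma integral_conv (d : ℕ) (ρd : (Fin d → ℝ) → ℝ) (hmeas : Measurable ρd) (hnonneg : ∀ t, 0 ≤ ρd t)
    [IsProbabilityMeasure ((volume.restrict (Set.Icc (0 : Fin d → ℝ) 1)).withDensity (fun t => ENNReal.ofReal (ρd t)))]
    (N : ℕ) (F : (Fin N → Fin d → ℝ) → ℝ) :
    ∫ T in Set.Icc (0 : Fin N → Fin d → ℝ) 1, (∏ k, ρd (T k)) * F T =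
    ∫ T, F T ∂(Measure.pi (fun _ : Fin N => 
      (volume.restrict (Set.Icc (0 : Fin d → ℝ) 1)).withDensity (fun t => ENNReal.ofReal (ρd t)))) := by
  have hν : IsProbabilityMeasure (volume.restrict (Set.Icc (0 : Fin d → ℝ) 1)) := by
    constructor
    rw [Measure.restrict_apply_univ, Real.volume_Icc_pi]
    simp
  have hr : (volume : Measure (Fin N → Fin d → ℝ)).restrict (Set.Icc 0 1) =
      Measure.pi (fun _ : Fin N => volume.restrict (Set.Icc (0 : Fin d → ℝ) 1)) := by
    rw [← Measure.restrict_pi_pi, volume_pi]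
    congr 1
    exact (Set.pi_univ_Icc _ _).symm
  rw [pi_withDens _ _ hmeas.ennreal_ofReal, hr, integral_withDensity_eq_integral_toReal_smul]
  · congr 1; ext T
    rw [ENNReal.toReal_prod]
    simp [hnonneg]
  · exact Finset.measurable_fun_prod _ fun k _ => hmeas.ennreal_ofReal.comp (measurable_pi_apply k)
  · exact ae_of_all _ fun T => ENNReal.prod_lt_top fun k _ => ENNReal.ofReal_lt_top


lemma map_restrict_infinitePi {E : Type} [MeasurableSpace E] (μ : Measure E)
    [IsProbabilityMeasure μ] (N : ℕ) :
    (Measure.infinitePi (fun _ : ℕ => μ)).map (fun ω (k : Fin N) => ω (k : ℕ)) =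
      Measure.pi fun _ : Fin N => μ := by
  have h := Measure.map_infinitePi_infinitePi_of_inj (P := fun _ : ℕ => μ)
    (f := fun k : Fin N => (k : ℕ)) Fin.val_injective
  have h2 := Measure.infinitePi_eq_pi (μ := fun _ : Fin N => μ)
  exact h.trans h2

set_option maxHeartbeats 1000000

/-- For i.i.d. points drawn from a density `ρd` bounded below on
`[0,1]^d` with weights `a_k = 1/(N ρd(t_k))`,
`N^{p/2} E[∫ |Δ|^p] → (2^{p/2}/√π) Γ((p+1)/2) ∫ (∫ 1_{[0,x)}/ρd - (x₁⋯x_d)²)^{p/2} dx`. -/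
theorem limit_average_Lp_discrepancy_density
    (p : ℝ) (hp : 1 ≤ p) (d : ℕ)
    (ρd : (Fin d → ℝ) → ℝ)
    (hmeas : Measurable ρd)
    (hnonneg : ∀ t, 0 ≤ ρd t)
    (hprob : ∫ t in Set.Icc (0 : Fin d → ℝ) 1, ρd t = 1)
    (c₀ : ℝ) (hc₀ : 0 < c₀)
    (hlb : ∀ᵐ t ∂(volume.restrict (Set.Icc (0 : Fin d → ℝ) 1)), c₀ ≤ ρd t) :
    Tendsto
      (fun N : ℕ =>
        (N : ℝ) ^ (p / 2) *
          ∫ T in Set.Icc (0 : Fin N → Fin d → ℝ) 1,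
            (∏ k, ρd (T k)) *
              ∫ x in Set.Icc (0 : Fin d → ℝ) 1,
                |(∑ k, (1 / (N * ρd (T k))) *
                    (if ∀ j, T k j < x j then (1 : ℝ) else 0)) - ∏ j, x j| ^ p)
      atTop
      (nhds
        ((2 : ℝ) ^ (p / 2) / Real.sqrt Real.pi * Real.Gamma ((p + 1) / 2) *
          ∫ x in Set.Icc (0 : Fin d → ℝ) 1,
            ((∫ t in Set.Icc (0 : Fin d → ℝ) 1,
                (if ∀ j, t j < x j then (1 : ℝ) else 0) / ρd t)
              - (∏ j, x j) ^ 2) ^ (p / 2))) := by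
  classical
  set ν : Measure (Fin d → ℝ) := volume.restrict (Set.Icc (0 : Fin d → ℝ) 1) with hνdef
  have hν : IsProbabilityMeasure ν := by
    constructor
    rw [Measure.restrict_apply_univ, Real.volume_Icc_pi]
    simp
  have hcube : ∀ᵐ x ∂ν, x ∈ Set.Icc (0 : Fin d → ℝ) 1 := ae_restrict_mem measurableSet_Icc
  have hμ : IsProbabilityMeasure (ν.withDensity (fun t => ENNReal.ofReal (ρd t))) := by
    constructor
    rw [withDensity_apply _ MeasurableSet.univ, Measure.restrict_univ,
      ← ofReal_integral_eq_lintegral_ofReal (integrable_of_integral_eq_one hprob)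
        (ae_of_all _ hnonneg), hprob, ENNReal.ofReal_one]
  set μ : Measure (Fin d → ℝ) := ν.withDensity (fun t => ENNReal.ofReal (ρd t)) with hμdef
  have hlbμ : ∀ᵐ t ∂μ, c₀ ≤ ρd t := (withDensity_absolutelyContinuous _ _).ae_le hlb
  have hμint : ∀ f : (Fin d → ℝ) → ℝ, ∫ t, f t ∂μ = ∫ t, ρd t * f t ∂ν := by
    intro f
    rw [hμdef, integral_withDensity_eq_integral_toReal_smul hmeas.ennreal_ofReal
      (ae_of_all _ fun _ => ENNReal.ofReal_lt_top)]
    simp [hnonneg]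
  -- the summands
  let g : (Fin d → ℝ) → (Fin d → ℝ) → ℝ := fun x t =>
    (if ∀ j, t j < x j then (1 : ℝ) else 0) / ρd t
  have hgm2 : Measurable fun z : (Fin d → ℝ) × (Fin d → ℝ) => g z.1 z.2 := by
    refine Measurable.div (Measurable.ite ?_ measurable_const measurable_const)
      (hmeas.comp measurable_snd)
    rw [Set.ofPred_forall]
    exact MeasurableSet.iInter fun j => measurableSet_lt (by fun_prop) (by fun_prop)
  have hgm : ∀ x, Measurable (g x) := fun x => hgm2.comp (measurable_const.prodMk measurable_id)
  have hg0 : ∀ x t, 0 ≤ g x t := by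
    intro x t
    exact div_nonneg (by split_ifs <;> norm_num) (hnonneg t)
  have hgb : ∀ x t, c₀ ≤ ρd t → g x t ≤ 1 / c₀ := by
    intro x t ht
    exact div_le_div₀ zero_le_one (by split_ifs <;> norm_num) hc₀ ht
  let P : Measure (ℕ → Fin d → ℝ) := Measure.infinitePi (fun _ : ℕ => μ)
  let X : (Fin d → ℝ) → ℕ → (ℕ → Fin d → ℝ) → ℝ := fun x k ω => g x (ω k)
  have hev : ∀ k, MeasurePreserving (Function.eval k) P μ :=
    fun k => measurePreserving_eval_infinitePi _ k
  have hindep : ∀ x, iIndepFun (X x) P := fun x =>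
    iIndepFun_infinitePi (X := fun _ => g x) fun _ => hgm x
  have hid1 : ∀ x i, IdentDistrib (X x i) (g x) P μ := fun x i =>
    ⟨((hgm x).comp (hev i).measurable).aemeasurable, (hgm x).aemeasurable, by
      have : X x i = g x ∘ Function.eval i := rfl
      rw [this, ← Measure.map_map (hgm x) (hev i).measurable, (hev i).map_eq]⟩
  have hid : ∀ x i, IdentDistrib (X x i) (X x 0) P P := fun x i => (hid1 x i).trans (hid1 x 0).symm
  have hb : ∀ x i, ∀ᵐ ω ∂P, X x i ω ∈ Set.Icc 0 (1 / c₀) := by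
    intro x i
    have := (hev i).quasiMeasurePreserving.ae hlbμ
    filter_upwards [this] with ω hω
    exact ⟨hg0 _ _, hgb _ _ hω⟩
  have hmean : ∀ x ∈ Set.Icc (0 : Fin d → ℝ) 1, ∫ ω, X x 0 ω ∂P = ∏ j, x j := by
    intro x hx
    rw [(hid1 x 0).integral_eq, hμint]
    have h1 : ∫ t, ρd t * g x t ∂ν = ∫ t, (Set.univ.pi fun j => Set.Iio (x j)).indicator (fun _ => (1:ℝ)) t ∂ν := by
      refine integral_congr_ae ?_
      filter_upwards [hlb] with t ht
      have : ρd t ≠ 0 := by linarith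
      simp only [g, Set.indicator_apply, Set.mem_pi, Set.mem_univ, Set.mem_Iio, true_imp_iff]
      field_simp
    have hms : MeasurableSet (Set.univ.pi fun j => Set.Iio (x j)) :=
      MeasurableSet.univ_pi fun _ => measurableSet_Iio
    rw [h1, integral_indicator_const _ hms, smul_eq_mul, mul_one, measureReal_def, hνdef,
      Measure.restrict_apply hms]
    have h2 : (Set.univ.pi fun j => Set.Iio (x j)) ∩ Set.Icc (0 : Fin d → ℝ) 1 =
        Set.univ.pi fun j => Set.Ico ((0 : Fin d → ℝ) j) (x j) := by
      ext t
      simp only [Set.mem_inter_iff, Set.mem_pi, Set.mem_univ, Set.mem_Iio, true_imp_iff,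
        Set.mem_Icc, Set.mem_Ico, Pi.le_def]
      exact ⟨fun h j => ⟨h.2.1 j, h.1 j⟩,
        fun h => ⟨fun j => (h j).2, fun j => (h j).1, fun j => ((h j).2.le).trans (hx.2 j)⟩⟩
    rw [h2, Real.volume_pi_Ico_toReal hx.1]
    simp
  have hvar : ∀ x ∈ Set.Icc (0 : Fin d → ℝ) 1, Var[X x 0; P] = (∫ t, g x t ∂ν) - (∏ j, x j) ^ 2 := by
    intro x hx
    rw [variance_eq_sub (memLp_of_bounded (hb x 0) (hid x 0).aemeasurable_fst.aestronglyMeasurable 2),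
      hmean x hx]
    congr 1
    have h3 : ∫ ω, (X x 0 ^ 2) ω ∂P = ∫ t, g x t ^ 2 ∂μ := by
      have h4 := ((hid1 x 0).comp (u := fun s : ℝ => s ^ 2) (by fun_prop)).integral_eq
      simp only [Function.comp_apply] at h4
      simp only [Pi.pow_apply]
      exact h4
    rw [h3, hμint]
    refine integral_congr_ae ?_
    filter_upwards [hlb] with t ht
    have : ρd t ≠ 0 := by linarith
    simp only [g]
    split_ifs <;> simp
    field_simp
  -- the discrepancy
  let D : (N : ℕ) → (Fin N → Fin d → ℝ) → (Fin d → ℝ) → ℝ := fun N T x =>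
    (∑ k, (1 / (N * ρd (T k))) * (if ∀ j, T k j < x j then (1 : ℝ) else 0)) - ∏ j, x j
  have hDg : ∀ N T x, D N T x = (∑ k, (1 / (N:ℝ)) * g x (T k)) - ∏ j, x j := by
    intro N T x
    simp only [D, g]
    congr 1
    refine Finset.sum_congr rfl fun k _ => ?_
    rw [one_div, one_div, mul_inv, div_eq_mul_inv]
    ring
  have hDm : ∀ N, Measurable fun z : (Fin N → Fin d → ℝ) × (Fin d → ℝ) => D N z.1 z.2 := by
    intro N
    simp_rw [hDg]
    refine Measurable.sub (Finset.measurable_fun_sum _ fun k _ => ?_) (by fun_prop)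
    refine Measurable.const_mul ?_ _
    exact hgm2.comp (measurable_snd.prodMk ((measurable_pi_apply k).comp measurable_fst))
  have hFm : ∀ N, Measurable fun z : (Fin N → Fin d → ℝ) × (Fin d → ℝ) => |D N z.1 z.2| ^ p :=
    fun N => (continuous_abs.measurable.comp (hDm N)).pow_const p
  have hlbT : ∀ N, ∀ᵐ T ∂(Measure.pi fun _ : Fin N => μ), ∀ k, c₀ ≤ ρd (T k) := by
    intro N
    rw [ae_all_iff]
    intro k
    exact (measurePreserving_eval (fun _ : Fin N => μ) k).quasiMeasurePreserving.ae hlbμ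
  have hFi : ∀ N, Integrable (fun z : (Fin N → Fin d → ℝ) × (Fin d → ℝ) => |D N z.1 z.2| ^ p)
      ((Measure.pi fun _ : Fin N => μ).prod ν) := by
    intro N
    refine Integrable.of_bound (hFm N).aestronglyMeasurable
      (((∑ k : Fin N, (1 / (N:ℝ)) * (1 / c₀)) + 1) ^ p) ?_
    filter_upwards [Measure.quasiMeasurePreserving_fst.ae (hlbT N),
      Measure.quasiMeasurePreserving_snd.ae hcube] with z h1 h2
    rw [Real.norm_of_nonneg (by positivity)]
    refine Real.rpow_le_rpow (abs_nonneg _) ?_ (by linarith)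
    rw [hDg]
    have a1 : 0 ≤ ∑ k, (1 / (N:ℝ)) * g z.2 (z.1 k) :=
      Finset.sum_nonneg fun k _ => mul_nonneg (by positivity) (hg0 _ _)
    have a2 : ∑ k, (1 / (N:ℝ)) * g z.2 (z.1 k) ≤ ∑ k : Fin N, (1 / (N:ℝ)) * (1 / c₀) :=
      Finset.sum_le_sum fun k _ => mul_le_mul_of_nonneg_left (hgb _ _ (h1 k)) (by positivity)
    have a3 : 0 ≤ ∏ j, z.2 j := Finset.prod_nonneg fun j _ => h2.1 j
    have a4 : ∏ j, z.2 j ≤ 1 := Finset.prod_le_one (fun j _ => h2.1 j) fun j _ => h2.2 j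
    rw [abs_le]; constructor <;> linarith
  let A : ℕ → (Fin d → ℝ) → ℝ := fun N x =>
    (N : ℝ) ^ (p / 2) * ∫ T, |D N T x| ^ p ∂(Measure.pi fun _ : Fin N => μ)
  have hA : ∀ N : ℕ, 0 < N → ∀ x ∈ Set.Icc (0 : Fin d → ℝ) 1, A N x =
      ∫ ω, |(√N)⁻¹ * (∑ k ∈ Finset.range N, X x k ω - N * P[X x 0])| ^ p ∂P := by
    intro N hN x hx
    have hN' : (0:ℝ) < N := by exact_mod_cast hN
    have hmap := map_restrict_infinitePi μ N
    have hpr : Measurable fun T : Fin N → Fin d → ℝ => (T, x) := measurable_id.prodMk measurable_const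
    have hFx : Measurable fun T : Fin N → Fin d → ℝ => |D N T x| ^ p := by
      have h9 := (hFm N).comp hpr
      simp only [Function.comp_def] at h9
      exact h9
    simp only [A]
    rw [← hmap, integral_map (measurable_pi_lambda _ fun k => measurable_pi_apply _).aemeasurable hFx.aestronglyMeasurable,
      ← integral_const_mul]
    congr 1
    ext ω
    have hs : (N:ℝ) ^ (p / 2) = (√N) ^ p := by
      rw [Real.sqrt_eq_rpow, ← Real.rpow_mul hN'.le]; congr 1; ring
    rw [hs, ← Real.mul_rpow (by positivity) (abs_nonneg _), hmean x hx, hDg,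
      ← Finset.mul_sum, Fin.sum_univ_eq_sum_range (fun k => g x (ω k)) N]
    congr 1
    nth_rewrite 1 [← abs_of_nonneg (Real.sqrt_nonneg (N:ℝ))]
    rw [← abs_mul]
    congr 1
    have h5 : √(N:ℝ) ≠ 0 := by positivity
    have h6 : (N:ℝ) = √N * √N := (Real.mul_self_sqrt hN'.le).symm
    simp only [X]
    generalize ∑ k ∈ Finset.range N, g x (ω k) = S
    generalize ∏ j, x j = V
    have h7 : √(N:ℝ) * (1 / (N:ℝ) * S - V) = √N * (1 / (√N * √N) * S - V) := by rw [← h6]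
    have h8 : (√(N:ℝ))⁻¹ * (S - N * V) = (√N)⁻¹ * (S - (√N * √N) * V) := by rw [← h6]
    rw [h7, h8]
    field_simp
  obtain ⟨B, hB0, hB⟩ := subG_moment p (by linarith) ((‖1 / c₀ - 0‖₊ / 2) ^ 2)
  have hlim : Tendsto (fun N => ∫ x, A N x ∂ν) atTop (nhds (∫ x, 
      ((2 : ℝ) ^ (p / 2) / Real.sqrt Real.pi * Real.Gamma ((p + 1) / 2) *
        ((∫ t, g x t ∂ν) - (∏ j, x j) ^ 2) ^ (p / 2)) ∂ν)) := by
    refine tendsto_integral_filter_of_dominated_convergence (fun _ => B) ?_ ?_ (integrable_const B) ?_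
    · refine Eventually.of_forall fun N => ?_
      exact ((hFi N).integral_prod_right.const_mul _).aestronglyMeasurable
    · filter_upwards [eventually_gt_atTop 0] with N hN
      filter_upwards [hcube] with x hx
      rw [hA N hN x hx, Real.norm_of_nonneg (integral_nonneg fun ω => by positivity)]
      exact (hB P _ (iid_subG P (X x) (hindep x) (hid x) _ (hb x) N)).2
    · filter_upwards [hcube] with x hx
      have := iid_tendsto P (X x) (hindep x) (hid x) _ (hb x) p hp
      rw [hvar x hx] at this
      refine this.congr' ?_
      filter_upwards [eventually_gt_atTop 0] with N hN
      exact (hA N hN x hx).symm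
  rw [integral_const_mul] at hlim
  refine hlim.congr fun N => ?_
  rw [integral_const_mul]
  congr 1
  rw [integral_conv d ρd hmeas hnonneg N (fun T => ∫ x, |D N T x| ^ p ∂ν)]
  exact (integral_integral_swap (hFi N)).symm
end

section
/- Let p ∈ [1,∞). For every measurable function ρ : [0,1] → [0,∞] with ∫_0^1 ρ(t) dt = 1 one has ∫_0^1 ( ∫_0^x 1/ρ(t) dt )^{p/2} dx ≥ (1/(p+1)) · ((p+2)/(p+1))^{p/2} (with the convention 1/0 = ∞). -/
open MeasureTheory ENNReal

theorem key_meas (f : ℝ → ℝ≥0∞) (c : ℝ≥0∞) (μ : Measure ℝ)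
    (hμ : μ = (volume.restrict (Set.Icc (0:ℝ) 1)).withDensity f) (S : Set ℝ)
    (hS : ∀ x ∈ S, (∫⁻ t in Set.Ico (0 : ℝ) x, f t) ≤ c) :
    μ S ≤ c := by
  have hac : μ ≪ volume.restrict (Set.Icc (0:ℝ) 1) := hμ ▸ withDensity_absolutelyContinuous _ _
  have hac' : μ ≪ volume := hac.trans Measure.restrict_le_self.absolutelyContinuous
  have hF : ∀ x, μ (Set.Ico 0 x) ≤ ∫⁻ t in Set.Ico (0 : ℝ) x, f t := by
    intro x
    rw [hμ, withDensity_apply _ measurableSet_Ico, Measure.restrict_restrict measurableSet_Ico]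
    exact lintegral_mono_set Set.inter_subset_left
  have hc : μ (Set.Icc 0 1)ᶜ = 0 := by
    apply hac
    rw [Measure.restrict_apply measurableSet_Icc.compl]
    simp
  have h1 : μ S ≤ μ (S ∩ Set.Icc 0 1) := by
    calc μ S ≤ μ ((S ∩ Set.Icc 0 1) ∪ (Set.Icc 0 1)ᶜ) := by
            apply measure_mono
            intro x hx
            by_cases h : x ∈ Set.Icc (0:ℝ) 1
            · exact Or.inl ⟨hx, h⟩
            · exact Or.inr h
      _ ≤ _ := (measure_union_le _ _).trans (by rw [hc, add_zero])
  refine h1.trans ?_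
  set T := S ∩ Set.Icc (0:ℝ) 1 with hT
  rcases T.eq_empty_or_nonempty with h | hne
  · simp [h]
  have hb : BddAbove T := ⟨1, fun x hx => hx.2.2⟩
  set y := sSup T
  have hsub : T ⊆ Set.Ico 0 y ∪ {y} := by
    intro x hx
    have hxy := le_csSup hb hx
    rcases hxy.lt_or_eq with h | h
    · exact Or.inl ⟨hx.2.1, h⟩
    · exact Or.inr h
  have h2 : μ T ≤ μ (Set.Ico 0 y) := by
    refine (measure_mono hsub).trans ((measure_union_le _ _).trans ?_)
    rw [hac' (by simp : volume {y} = 0), add_zero]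
  refine h2.trans ?_
  have hU : Set.Ico 0 y = ⋃ n : ℕ, Set.Ico 0 (y - 1 / ((n:ℝ) + 1)) := by
    ext x
    simp only [Set.mem_Ico, Set.mem_iUnion]
    constructor
    · rintro ⟨h0, h1⟩
      obtain ⟨n, hn⟩ := exists_nat_one_div_lt (sub_pos.2 h1)
      exact ⟨n, h0, by linarith⟩
    · rintro ⟨n, h0, h1⟩
      have : (0:ℝ) < 1 / ((n:ℝ) + 1) := by positivity
      exact ⟨h0, by linarith⟩
  have hmono : Monotone fun n : ℕ => Set.Ico (0:ℝ) (y - 1 / ((n:ℝ) + 1)) := by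
    intro m n hmn
    apply Set.Ico_subset_Ico_right
    have := Nat.one_div_le_one_div (α := ℝ) hmn
    linarith
  rw [hU, hmono.measure_iUnion]
  apply iSup_le
  intro n
  have : (0:ℝ) < 1 / ((n:ℝ) + 1) := by positivity
  obtain ⟨x, hx, hxy⟩ := exists_lt_of_lt_csSup hne (show y - 1 / ((n:ℝ) + 1) < sSup T by
    change _ < y; linarith)
  exact (measure_mono (Set.Ico_subset_Ico_right hxy.le)).trans ((hF x).trans (hS x hx.1))

theorem key_int (f : ℝ → ℝ≥0∞) (hf : Measurable f) (φ : ℝ≥0∞ → ℝ) (hφ : Antitone φ)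
    (h0 : ∀ y, 0 ≤ φ y) (F : ℝ → ℝ≥0∞) (hF : ∀ x, F x = ∫⁻ t in Set.Ico (0 : ℝ) x, f t) :
    (∫⁻ x in Set.Icc (0:ℝ) 1, f x * ENNReal.ofReal (φ (F x)))
      ≤ ∫⁻ s in Set.Ioi (0:ℝ), ENNReal.ofReal (φ (ENNReal.ofReal s)) := by
  have hFm : Monotone F := by
    intro a b hab
    rw [hF, hF]
    exact lintegral_mono_set (Set.Ico_subset_Ico_right hab)
  have hm1 : Measurable fun x => φ (F x) := (hφ.comp_monotone hFm).measurable
  have hm2 : Measurable fun s : ℝ => φ (ENNReal.ofReal s) :=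
    (hφ.comp_monotone ENNReal.ofReal_mono).measurable
  have e : (∫⁻ x in Set.Icc (0:ℝ) 1, f x * ENNReal.ofReal (φ (F x)))
      = ∫⁻ x, ENNReal.ofReal (φ (F x)) ∂((volume.restrict (Set.Icc (0:ℝ) 1)).withDensity f) := by
    rw [lintegral_withDensity_eq_lintegral_mul _ hf hm1.ennreal_ofReal]
    rfl
  rw [e, lintegral_eq_lintegral_meas_lt _ (Filter.Eventually.of_forall fun x => h0 _) hm1.aemeasurable,
    lintegral_eq_lintegral_meas_lt _ (Filter.Eventually.of_forall fun x => h0 _) hm2.aemeasurable]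
  apply lintegral_mono
  intro t
  refine key_meas f _ _ rfl _ ?_
  intro x hx
  rw [← hF]
  replace hx : t < φ (F x) := hx
  beta_reduce
  rw [Measure.restrict_apply (measurableSet_lt measurable_const hm2)]
  apply le_of_forall_lt_imp_le_of_dense
  intro a ha
  have haf : a ≠ ∞ := ha.ne_top
  calc a = volume (Set.Ioc (0:ℝ) a.toReal) := by
        rw [Real.volume_Ioc, sub_zero, ENNReal.ofReal_toReal haf]
    _ ≤ _ := by
        apply measure_mono
        intro s hs
        refine ⟨lt_of_lt_of_le hx (hφ ?_), hs.1⟩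
        exact (ENNReal.ofReal_le_of_le_toReal hs.2).trans ha.le

theorem amgm (r a : ℝ≥0∞) (ha : a ≠ ∞) : 2 * a ≤ r + 1 / r * a ^ 2 := by
  rcases eq_or_ne a 0 with rfl | ha0
  · simp
  rcases eq_or_ne r 0 with rfl | hr0
  · have : (1:ℝ≥0∞) / 0 * a ^ 2 = ∞ := by
      rw [ENNReal.div_zero one_ne_zero, ENNReal.top_mul (pow_ne_zero 2 ha0)]
    rw [this]; simp
  rcases eq_or_ne r ∞ with rfl | hr
  · simp
  lift a to NNReal using ha
  lift r to NNReal using hr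
  have hr0' : r ≠ 0 := by simpa using hr0
  rw [one_div, ← ENNReal.coe_inv hr0']
  norm_cast
  rw [← NNReal.coe_le_coe]
  push_cast
  have hpos : (0:ℝ) < r := by positivity
  have : (r:ℝ) + (r:ℝ)⁻¹ * a ^ 2 - 2 * a = (r:ℝ)⁻¹ * (r - a) ^ 2 := by field_simp; ring
  have h2 : 0 ≤ (r:ℝ)⁻¹ * ((r:ℝ) - a) ^ 2 := by positivity
  linarith

theorem phi_int (q M : ℝ) (hq : 0 < q) (hM : 0 < M) :
    (∫⁻ s in Set.Ioi (0:ℝ), ENNReal.ofReal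
      (((1 - (ENNReal.ofReal s / ENNReal.ofReal M) ^ q : ℝ≥0∞) ^ 2).toReal))
    ≤ ENNReal.ofReal (M * (2 * q ^ 2 / ((q + 1) * (2 * q + 1)))) := by
  have hpt : ∀ s ∈ Set.Ioi (0:ℝ), ENNReal.ofReal
      (((1 - (ENNReal.ofReal s / ENNReal.ofReal M) ^ q : ℝ≥0∞) ^ 2).toReal)
      ≤ (Set.Ioc 0 M).indicator (fun s => ENNReal.ofReal ((1 - (s / M) ^ q) ^ 2)) s := by
    intro s hs
    have hs : 0 < s := hs
    rw [← ENNReal.ofReal_div_of_pos hM, ENNReal.ofReal_rpow_of_pos (by positivity)]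
    rw [← ENNReal.ofReal_one, ← ENNReal.ofReal_sub _ (by positivity)]
    by_cases h : s ≤ M
    · rw [Set.indicator_of_mem (show s ∈ Set.Ioc 0 M from ⟨hs, h⟩)]
      have : 0 ≤ 1 - (s / M) ^ q := by
        have := Real.rpow_le_one (by positivity : 0 ≤ s / M) ((div_le_one hM).2 h) hq.le
        linarith
      rw [ENNReal.toReal_pow, ENNReal.toReal_ofReal this]
    · have : 1 - (s / M) ^ q ≤ 0 := by
        have := Real.one_le_rpow ((one_le_div hM).2 (not_le.1 h).le) hq.le
        linarith
      rw [ENNReal.ofReal_of_nonpos this]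
      simp
  refine (setLIntegral_mono' measurableSet_Ioi hpt).trans ?_
  refine (lintegral_mono' Measure.restrict_le_self le_rfl).trans ?_
  rw [lintegral_indicator measurableSet_Ioc]
  have hc1 : IntervalIntegrable (fun s : ℝ => s ^ q) volume 0 M :=
    intervalIntegral.intervalIntegrable_rpow' (by linarith)
  have hc2 : IntervalIntegrable (fun s : ℝ => s ^ (2 * q)) volume 0 M :=
    intervalIntegral.intervalIntegrable_rpow' (by linarith)
  have hcont : Continuous fun s : ℝ => (1 - (s / M) ^ q) ^ 2 := by
    have : Continuous fun s : ℝ => (s / M) ^ q :=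
      (continuous_id.div_const M).rpow_const (fun _ => Or.inr hq.le)
    fun_prop
  rw [← ofReal_integral_eq_lintegral_ofReal (hcont.integrableOn_Ioc)
    (Filter.Eventually.of_forall fun s => sq_nonneg _)]
  apply le_of_eq
  congr 1
  rw [← intervalIntegral.integral_of_le hM.le]
  have e : ∫ s in (0:ℝ)..M, (1 - (s / M) ^ q) ^ 2
      = ∫ s in (0:ℝ)..M, (1 - 2 / M ^ q * s ^ q + (1 / M ^ (2 * q)) * s ^ (2 * q)) := by
    apply intervalIntegral.integral_congr
    intro s hs
    rw [Set.uIcc_of_le hM.le] at hs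
    have h2 : ∀ z : ℝ, 0 ≤ z → z ^ (2 * q) = (z ^ q) ^ 2 := by
      intro z hz
      rw [mul_comm, Real.rpow_mul hz]; norm_cast
    simp only
    rw [Real.div_rpow hs.1 hM.le, h2 s hs.1, h2 M hM.le]
    have := Real.rpow_pos_of_pos hM q
    field_simp
    ring
  rw [e, intervalIntegral.integral_add ((intervalIntegrable_const).sub (hc1.const_mul _)) (hc2.const_mul _),
    intervalIntegral.integral_sub intervalIntegrable_const (hc1.const_mul _),
    intervalIntegral.integral_const_mul, intervalIntegral.integral_const_mul,
    integral_rpow (Or.inl (by linarith)), integral_rpow (Or.inl (by linarith)),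
    Real.zero_rpow (by linarith), Real.zero_rpow (by linarith),
    Real.rpow_add_one hM.ne', Real.rpow_add_one hM.ne']
  have := Real.rpow_pos_of_pos hM q
  have := Real.rpow_pos_of_pos hM (2 * q)
  simp only [intervalIntegral.integral_const, smul_eq_mul]
  field_simp
  ring

/-- For every probability density `ρ` on `[0,1]` one has
`∫_0^1 (∫_0^x 1/ρ(t) dt)^{p/2} dx ≥ (1/(p+1)) ((p+2)/(p+1))^{p/2}`. -/
theorem J_functional_lower_bound
    (p : ℝ) (hp : 1 ≤ p)
    (ρ : ℝ → ℝ≥0∞)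
    (hmeas : Measurable ρ)
    (hprob : (∫⁻ t in Set.Icc (0 : ℝ) 1, ρ t) = 1) :
    ENNReal.ofReal ((1 / (p + 1)) * ((p + 2) / (p + 1)) ^ (p / 2))
      ≤ ∫⁻ x in Set.Icc (0 : ℝ) 1, (∫⁻ t in Set.Ico (0 : ℝ) x, 1 / ρ t) ^ (p / 2) := by
  set F : ℝ → ℝ≥0∞ := fun x => ∫⁻ t in Set.Ico (0 : ℝ) x, 1 / ρ t with hFdef
  change _ ≤ ∫⁻ x in Set.Icc (0 : ℝ) 1, F x ^ (p / 2)
  set q := p / 2 with hq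
  set M := (p + 2) / (p + 1) with hM
  set A := (p + 1) / p with hA
  have hq0 : 0 < q := by positivity
  have hM0 : 0 < M := by positivity
  have hA0 : 0 < A := by positivity
  have hf : Measurable fun t => 1 / ρ t := by fun_prop
  have hFm : Measurable F := by
    apply Monotone.measurable
    intro a b hab
    exact lintegral_mono_set (Set.Ico_subset_Ico_right hab)
  set ψ : ℝ≥0∞ → ℝ≥0∞ := fun y => 1 - (y / ENNReal.ofReal M) ^ q with hψ
  have hψ1 : ∀ y, ψ y ≤ 1 := fun y => tsub_le_self
  have hψanti : Antitone ψ := by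
    intro a b hab
    simp only [hψ]
    gcongr
  have hψF : Measurable fun x => ψ (F x) := hψanti.measurable.comp hFm
  have hψ2top : ∀ y, ψ y ^ 2 ≠ ∞ := fun y =>
    ENNReal.pow_ne_top (ne_top_of_le_ne_top one_ne_top (hψ1 y))
  have hI := key_int (fun t => 1 / ρ t) hf (fun y => (ψ y ^ 2).toReal)
    (fun a b hab => ENNReal.toReal_mono (hψ2top a) (by have := hψanti hab; gcongr))
    (fun y => toReal_nonneg) F (fun x => rfl)
  replace hI := hI.trans (phi_int q M hq0 hM0)
  simp only [ENNReal.ofReal_toReal (hψ2top _)] at hI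
  set a := ENNReal.ofReal A with ha
  set K := ∫⁻ x in Set.Icc (0:ℝ) 1, ψ (F x) with hK
  have h1 : 2 * a * K ≤ 2 := by
    calc 2 * a * K = ∫⁻ x in Set.Icc (0:ℝ) 1, 2 * a * ψ (F x) := by
          rw [lintegral_const_mul _ hψF]
      _ ≤ ∫⁻ x in Set.Icc (0:ℝ) 1, (ρ x + a ^ 2 * (1 / ρ x * ψ (F x) ^ 2)) := by
          apply lintegral_mono
          intro x
          have := amgm (ρ x) (a * ψ (F x))
            (ENNReal.mul_ne_top ofReal_ne_top (ne_top_of_le_ne_top one_ne_top (hψ1 _)))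
          calc 2 * a * ψ (F x) = 2 * (a * ψ (F x)) := by ring
            _ ≤ _ := this
            _ = _ := by ring
      _ = 1 + a ^ 2 * ∫⁻ x in Set.Icc (0:ℝ) 1, 1 / ρ x * ψ (F x) ^ 2 := by
          have hmm : Measurable fun x => 1 / ρ x * ψ (F x) ^ 2 := hf.mul (hψF.pow_const 2)
          rw [lintegral_add_left hmeas, hprob, lintegral_const_mul _ hmm]
      _ ≤ 1 + a ^ 2 * ENNReal.ofReal (M * (2 * q ^ 2 / ((q + 1) * (2 * q + 1)))) := by gcongr
      _ = 2 := by
          rw [ha, ← ENNReal.ofReal_pow hA0.le, ← ENNReal.ofReal_mul (by positivity)]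
          have : A ^ 2 * (M * (2 * q ^ 2 / ((q + 1) * (2 * q + 1)))) = 1 := by
            rw [hA, hM, hq]
            have : p ≠ 0 := by positivity
            have : p + 1 ≠ 0 := by positivity
            have : p + 2 ≠ 0 := by positivity
            field_simp
          rw [this, ENNReal.ofReal_one]; norm_num
  set J := ∫⁻ x in Set.Icc (0 : ℝ) 1, F x ^ q with hJ
  set m := ENNReal.ofReal (M ^ q) with hm
  have hm0 : m ≠ 0 := by simpa [hm] using Real.rpow_pos_of_pos hM0 q
  have h2 : 1 ≤ K + m⁻¹ * J := by
    calc (1:ℝ≥0∞) = ∫⁻ x in Set.Icc (0:ℝ) 1, 1 := by simp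
      _ ≤ ∫⁻ x in Set.Icc (0:ℝ) 1, (ψ (F x) + m⁻¹ * F x ^ q) := by
          apply lintegral_mono
          intro x
          have e : m⁻¹ * F x ^ q = (F x / ENNReal.ofReal M) ^ q := by
            rw [ENNReal.div_rpow_of_nonneg _ _ hq0.le, ENNReal.ofReal_rpow_of_pos hM0,
              ENNReal.div_eq_inv_mul]
          simp only [e, hψ]
          exact le_tsub_add
      _ = _ := by rw [lintegral_add_left hψF, lintegral_const_mul _ (hFm.pow_const q)]
  rcases eq_or_ne J ∞ with hJt | hJt
  · rw [hJt]; exact le_top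
  have hKt : K ≠ ∞ := by
    refine ne_top_of_le_ne_top one_ne_top (b := (1:ℝ≥0∞)) ?_
    calc K ≤ ∫⁻ x in Set.Icc (0:ℝ) 1, 1 := lintegral_mono fun x => hψ1 _
      _ = 1 := by simp
  have hmi : m⁻¹ = ENNReal.ofReal ((M ^ q)⁻¹) := by
    rw [ENNReal.ofReal_inv_of_pos (Real.rpow_pos_of_pos hM0 q)]
  have r1 := ENNReal.toReal_mono (by simp) h1
  have r2 := ENNReal.toReal_mono (by
    rw [hmi]; exact ENNReal.add_ne_top.2 ⟨hKt, ENNReal.mul_ne_top ofReal_ne_top hJt⟩) h2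
  have hMq := Real.rpow_pos_of_pos hM0 q
  rw [ENNReal.toReal_add hKt (by rw [hmi]; exact ENNReal.mul_ne_top ofReal_ne_top hJt),
    ENNReal.toReal_mul, hmi, ENNReal.toReal_ofReal (by positivity)] at r2
  rw [ENNReal.toReal_mul, ENNReal.toReal_mul, ha, ENNReal.toReal_ofReal hA0.le] at r1
  simp only [ENNReal.toReal_ofNat, ENNReal.toReal_one] at r1 r2
  apply ENNReal.ofReal_le_of_le_toReal
  have r3 : K.toReal ≤ p / (p + 1) := by
    rw [le_div_iff₀ (by positivity)]
    rw [hA] at r1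
    have hp0 : 0 < p := by linarith
    have : 2 * ((p + 1) / p) * K.toReal = 2 * (K.toReal * (p + 1)) / p := by ring
    rw [this, div_le_iff₀ hp0] at r1
    linarith
  have r4 : 1 / (p + 1) ≤ (M ^ q)⁻¹ * J.toReal := by
    have : 1 / (p + 1) = 1 - p / (p + 1) := by field_simp; ring
    linarith
  calc 1 / (p + 1) * M ^ q ≤ (M ^ q)⁻¹ * J.toReal * M ^ q := by gcongr
    _ = J.toReal := by field_simp
end

section
/- Define ρ*(t) = 1 + 2·cos( (1/3)·arccos(2t−1) + 4π/3 ) for t ∈ [0,1]. Then for every t ∈ [0,1]: ρ*(t)³ − 3·ρ*(t)² + 4(1−t) = 0 (equivalently 4t = (2−ρ*(t))²·(1+ρ*(t))); moreover ρ*(0) = 2, ρ*(1) = 0, 0 ≤ ρ*(t) ≤ 2 for all t ∈ [0,1], and ∫_0^1 ρ*(t) dt = 1. -/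
open MeasureTheory Real

/-- The function `ρ*(t) = 1 + 2cos((1/3)arccos(2t-1) + 4π/3)`
satisfies the cubic `ρ*³ - 3ρ*² + 4(1-t) = 0` (equivalently
`4t = (2-ρ*)²(1+ρ*)`), has `ρ*(0) = 2`, `ρ*(1) = 0`, takes values in `[0,2]`,
and is a probability density on `[0,1]`. -/
theorem optimal_density_p_one_properties
    (ρstar : ℝ → ℝ)
    (hρ : ∀ t, ρstar t = 1 + 2 * Real.cos ((1 / 3) * Real.arccos (2 * t - 1)
        + 4 * Real.pi / 3)) :
    (∀ t ∈ Set.Icc (0 : ℝ) 1,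
        ρstar t ^ 3 - 3 * ρstar t ^ 2 + 4 * (1 - t) = 0) ∧
    (∀ t ∈ Set.Icc (0 : ℝ) 1,
        4 * t = (2 - ρstar t) ^ 2 * (1 + ρstar t)) ∧
    ρstar 0 = 2 ∧
    ρstar 1 = 0 ∧
    (∀ t ∈ Set.Icc (0 : ℝ) 1, 0 ≤ ρstar t ∧ ρstar t ≤ 2) ∧
    (∫ t in Set.Icc (0 : ℝ) 1, ρstar t) = 1 := by
  have h' : ∀ t, ρstar t = 1 - 2 * Real.cos (Real.arccos (2 * t - 1) / 3 + Real.pi / 3) := by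
    intro t
    rw [hρ, show (1 / 3) * Real.arccos (2 * t - 1) + 4 * Real.pi / 3
      = (Real.arccos (2 * t - 1) / 3 + Real.pi / 3) + Real.pi by ring, Real.cos_add_pi]
    ring
  have hcub : ∀ t ∈ Set.Icc (0 : ℝ) 1, ρstar t ^ 3 - 3 * ρstar t ^ 2 + 4 * (1 - t) = 0 := by
    intro t ht
    have h3 := Real.cos_three_mul (Real.arccos (2 * t - 1) / 3 + Real.pi / 3)
    rw [show 3 * (Real.arccos (2 * t - 1) / 3 + Real.pi / 3)
      = Real.arccos (2 * t - 1) + Real.pi by ring, Real.cos_add_pi,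
      Real.cos_arccos (by linarith [ht.1]) (by linarith [ht.2])] at h3
    rw [h']
    linear_combination 2 * h3
  have hc2 : Real.cos (2 * Real.pi / 3) = -(1 / 2) := by
    rw [show 2 * Real.pi / 3 = Real.pi - Real.pi / 3 by ring, Real.cos_pi_sub,
      Real.cos_pi_div_three]
  refine ⟨hcub, ?_, ?_, ?_, ?_, ?_⟩
  · intro t ht
    linear_combination -(hcub t ht)
  · rw [h', show (2 * 0 - 1 : ℝ) = -1 by norm_num, Real.arccos_neg_one,
      show Real.pi / 3 + Real.pi / 3 = 2 * Real.pi / 3 by ring, hc2]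
    norm_num
  · rw [h', show (2 * 1 - 1 : ℝ) = 1 by norm_num, Real.arccos_one, zero_div, zero_add,
      Real.cos_pi_div_three]
    norm_num
  · intro t ht
    have a0 := Real.arccos_nonneg (2 * t - 1)
    have a1 := Real.arccos_le_pi (2 * t - 1)
    have hp := Real.pi_pos
    have u : Real.cos (Real.arccos (2 * t - 1) / 3 + Real.pi / 3) ≤ Real.cos (Real.pi / 3) :=
      Real.cos_le_cos_of_nonneg_of_le_pi (by linarith) (by linarith) (by linarith)
    have l : Real.cos (2 * Real.pi / 3) ≤ Real.cos (Real.arccos (2 * t - 1) / 3 + Real.pi / 3) :=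
      Real.cos_le_cos_of_nonneg_of_le_pi (by linarith) (by linarith) (by linarith)
    rw [Real.cos_pi_div_three] at u
    rw [hc2] at l
    rw [h']
    constructor <;> linarith
  · have hcont : Continuous ρstar := by
      rw [funext hρ]
      have := Real.continuous_arccos
      fun_prop
    have hsym : ∀ t, ρstar (1 - t) = 2 - ρstar t := by
      intro t
      rw [h', h', show 2 * (1 - t) - 1 = -(2 * t - 1) by ring, Real.arccos_neg,
        show (Real.pi - Real.arccos (2 * t - 1)) / 3 + Real.pi / 3
          = Real.pi - (Real.arccos (2 * t - 1) / 3 + Real.pi / 3) by ring, Real.cos_pi_sub]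
      ring
    rw [MeasureTheory.integral_Icc_eq_integral_Ioc,
      ← intervalIntegral.integral_of_le (zero_le_one)]
    have e := intervalIntegral.integral_comp_sub_left (a := 0) (b := 1) ρstar 1
    simp only [hsym] at e
    rw [intervalIntegral.integral_sub (by simp) (hcont.intervalIntegrable _ _)] at e
    simp at e
    linarith
end

section
/- Let ρ*(t) = 1 + 2·cos( (1/3)·arccos(2t−1) + 4π/3 ) for t ∈ [0,1]. Then ∫_0^1 ( ∫_0^x 1/ρ*(t) dt )^{1/2} dx = (1/2)·(3/2)^{1/2}; in particular ρ* attains the minimal value (1/(p+1))·((p+2)/(p+1))^{p/2} with p = 1 of the functional J(ρ) = ∫_0^1 ( ∫_0^x 1/ρ(t) dt )^{p/2} dx over all probability densities ρ on [0,1]. -/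
open MeasureTheory ENNReal

lemma aux_ftc (F f : ℝ → ℝ) (a b : ℝ) (hab : a ≤ b) (hc : ContinuousOn F (Set.Icc a b))
    (hd : ∀ x ∈ Set.Ioo a b, HasDerivAt F (f x) x) (hf : ∀ x ∈ Set.Ioo a b, 0 ≤ f x) :
    ∫⁻ x in Set.Ioo a b, ENNReal.ofReal (f x) = ENNReal.ofReal (F b - F a) := by
  have hi : IntegrableOn f (Set.Ioc a b) :=
    intervalIntegral.integrableOn_deriv_of_nonneg hc hd hf
  have h2 := intervalIntegral.integral_eq_sub_of_hasDerivAt_of_le hab hc hd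
    ((intervalIntegrable_iff_integrableOn_Ioc_of_le hab).2 hi)
  rw [← h2, intervalIntegral.integral_of_le hab, integral_Ioc_eq_integral_Ioo,
    ofReal_integral_eq_lintegral_ofReal (hi.mono_set Set.Ioo_subset_Ioc_self)]
  exact (ae_restrict_iff' measurableSet_Ioo).2 (Filter.Eventually.of_forall hf)

lemma aux_range (t : ℝ) (ht : t ∈ Set.Ioo (0:ℝ) 1) (r : ℝ)
    (hr : r = 1 + 2 * Real.cos ((1 / 3) * Real.arccos (2 * t - 1) + 4 * Real.pi / 3)) :
    0 < r ∧ r < 2 := by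
  have h0 : 0 < Real.arccos (2*t-1) := Real.arccos_pos.2 (by linarith [ht.2])
  have h1 : Real.arccos (2*t-1) < Real.pi := by
    refine lt_of_le_of_ne (Real.arccos_le_pi _) fun h => ?_
    have := Real.arccos_eq_pi.1 h
    linarith [ht.1]
  have hp := Real.pi_pos
  have e : Real.cos ((1 / 3) * Real.arccos (2 * t - 1) + 4 * Real.pi / 3)
      = - Real.cos ((1 / 3) * Real.arccos (2 * t - 1) + Real.pi / 3) := by
    rw [← Real.cos_add_pi]; congr 1; ring
  have h2 := Real.cos_lt_cos_of_nonneg_of_le_pi (x := Real.pi/3)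
    (y := (1 / 3) * Real.arccos (2 * t - 1) + Real.pi / 3) (by linarith) (by linarith) (by linarith)
  have h3 := Real.cos_lt_cos_of_nonneg_of_le_pi 
    (x := (1 / 3) * Real.arccos (2 * t - 1) + Real.pi / 3) (y := Real.pi - Real.pi/3)
    (by linarith) (by linarith) (by linarith)
  rw [Real.cos_pi_sub] at h3
  rw [Real.cos_pi_div_three] at h2 h3
  rw [hr, e]
  constructor <;> linarith

lemma aux_cubic (t : ℝ) (h0 : 0 ≤ t) (h1 : t ≤ 1) (r : ℝ)
    (hr : r = 1 + 2 * Real.cos ((1 / 3) * Real.arccos (2 * t - 1) + 4 * Real.pi / 3)) :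
    1 - (3 * r ^ 2 - r ^ 3) / 4 = t := by
  have h := Real.cos_three_mul ((1 / 3) * Real.arccos (2 * t - 1) + 4 * Real.pi / 3)
  have e : 3 * ((1 / 3) * Real.arccos (2 * t - 1) + 4 * Real.pi / 3)
    = Real.arccos (2 * t - 1) + (2:ℕ) * (2 * Real.pi) := by push_cast; ring
  rw [e, Real.cos_add_nat_mul_two_pi, Real.cos_arccos (by linarith) (by linarith)] at h
  rw [hr]
  linear_combination (-1/2) * h

lemma aux_zero (r : ℝ)
    (hr : r = 1 + 2 * Real.cos ((1 / 3) * Real.arccos (2 * 0 - 1) + 4 * Real.pi / 3)) : r = 2 := by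
  have : (2 * 0 - 1 : ℝ) = -1 := by norm_num
  rw [this, Real.arccos_neg_one] at hr
  have e : (1 / 3) * Real.pi + 4 * Real.pi / 3 = 2 * Real.pi - Real.pi / 3 := by ring
  rw [e, Real.cos_two_pi_sub, Real.cos_pi_div_three] at hr
  linarith

lemma aux_one (r : ℝ)
    (hr : r = 1 + 2 * Real.cos ((1 / 3) * Real.arccos (2 * 1 - 1) + 4 * Real.pi / 3)) : r = 0 := by
  have : (2 * 1 - 1 : ℝ) = 1 := by norm_num
  rw [this, Real.arccos_one] at hr
  have e : (1 / 3) * 0 + 4 * Real.pi / 3 = Real.pi / 3 + Real.pi := by ring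
  rw [e, Real.cos_add_pi, Real.cos_pi_div_three] at hr
  linarith

lemma aux_deriv (r : ℝ → ℝ)
    (hr : ∀ t, r t = 1 + 2 * Real.cos ((1 / 3) * Real.arccos (2 * t - 1) + 4 * Real.pi / 3))
    (t : ℝ) (ht : t ∈ Set.Ioo (0:ℝ) 1) :
    HasDerivAt r (-(4 / (3 * r t * (2 - r t)))) t := by
  have hd : DifferentiableAt ℝ r t := by
    rw [funext hr]
    have : DifferentiableAt ℝ (fun t : ℝ => Real.arccos (2 * t - 1)) t := by
      have := (Real.differentiableAt_arccos (x := 2 * t - 1)).2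
        ⟨by linarith [ht.1], by linarith [ht.2]⟩
      exact DifferentiableAt.comp (g := Real.arccos) (f := fun t : ℝ => 2 * t - 1) t this (by fun_prop)
    fun_prop
  have h := hd.hasDerivAt
  have h2 : HasDerivAt (fun t => 1 - (3 * r t ^ 2 - r t ^ 3) / 4) 1 t := by
    refine (hasDerivAt_id t).congr_of_eventuallyEq ?_
    filter_upwards [isOpen_Ioo.mem_nhds ht] with s hs
    exact aux_cubic s hs.1.le hs.2.le _ (hr s)
  have h3 := ((((h.pow 2).const_mul 3).sub (h.pow 3)).div_const 4).const_sub 1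
  have h4 := h3.unique h2
  obtain ⟨p0, p2⟩ := aux_range t ht _ (hr t)
  have p3 : 0 < 2 - r t := by linarith
  have : deriv r t = -(4 / (3 * r t * (2 - r t))) := by
    field_simp
    norm_num at h4
    linear_combination (-4) * h4
  rwa [this] at h

lemma aux_amgm (ρ : ℝ≥0∞) (w μ : ℝ) (hw : 0 < w) (hμ : 0 < μ) :
    ENNReal.ofReal (2 * μ * w) ≤
      ENNReal.ofReal (w ^ 2) * ρ + ENNReal.ofReal (μ ^ 2) * (1 / ρ) := by
  rcases eq_or_ne ρ 0 with h | h
  · subst h; have : ENNReal.ofReal (μ ^ 2) ≠ 0 := by simpa using hμ.ne'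
    simp [ENNReal.mul_top this]
  rcases eq_or_ne ρ ⊤ with h' | h'
  · subst h'; have : ENNReal.ofReal (w ^ 2) ≠ 0 := by simpa using hw.ne'
    simp [ENNReal.mul_top this]
  have hp := ENNReal.toReal_pos h h'
  rw [← ENNReal.ofReal_toReal h', ← ENNReal.ofReal_one, ← ENNReal.ofReal_div_of_pos hp,
    ← ENNReal.ofReal_mul (by positivity), ← ENNReal.ofReal_mul (by positivity),
    ← ENNReal.ofReal_add (by positivity) (by positivity)]
  apply ENNReal.ofReal_le_ofReal
  set y := ρ.toReal
  have : w ^ 2 * y + μ ^ 2 * (1 / y) - 2 * μ * w = (w * y - μ) ^ 2 / y := by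
    field_simp; ring
  have : 0 ≤ (w * y - μ) ^ 2 / y := by positivity
  linarith

lemma aux_pt_s10 (A G : ℝ≥0∞) (q : ℝ) (hq : 0 < q)
    (h : ∀ μ : ℝ, 0 < μ → ENNReal.ofReal (2 * μ * q ^ 2) ≤ A + ENNReal.ofReal (μ ^ 2) * G) :
    ENNReal.ofReal (3 / 2 * q) ≤ G ^ ((1:ℝ)/2) + ENNReal.ofReal (1 / (2 * q)) * A := by
  rcases eq_or_ne G ⊤ with h' | hG
  · subst h'; simp
  rcases eq_or_ne A ⊤ with h' | hA
  · subst h'; simp [ENNReal.mul_top, hq]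
  rw [← ENNReal.ofReal_toReal hG, ← ENNReal.ofReal_toReal hA] at h ⊢
  set a := A.toReal
  set g2 := G.toReal
  have ha : 0 ≤ a := ENNReal.toReal_nonneg
  have hg2 : 0 ≤ g2 := ENNReal.toReal_nonneg
  have h' : ∀ μ : ℝ, 0 < μ → 2 * μ * q ^ 2 ≤ a + μ ^ 2 * g2 := by
    intro μ hμ
    have := h μ hμ
    rw [← ENNReal.ofReal_mul (by positivity), ← ENNReal.ofReal_add ha (by positivity)] at this
    exact (ENNReal.ofReal_le_ofReal_iff (by positivity)).1 this
  rw [ENNReal.ofReal_rpow_of_nonneg hg2 (by norm_num), ← Real.sqrt_eq_rpow,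
    ← ENNReal.ofReal_mul (by positivity), ← ENNReal.ofReal_add (by positivity) (by positivity)]
  apply ENNReal.ofReal_le_ofReal
  have hs := Real.sq_sqrt hg2
  have hs0 := Real.sqrt_nonneg g2
  set g := Real.sqrt g2
  rcases hs0.eq_or_lt with hg | hg
  · exfalso
    have h1 := h' ((a + 3 * q ^ 2) / q ^ 2) (by positivity)
    have e : 2 * ((a + 3 * q ^ 2) / q ^ 2) * q ^ 2 = 2 * (a + 3 * q ^ 2) := by field_simp
    rw [← hs, ← hg, e] at h1
    have : 0 < q ^ 2 := by positivity
    linarith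
  · have h1 := h' (q / g) (by positivity)
    rw [← hs] at h1
    have e : a + (q / g) ^ 2 * g ^ 2 = a + q ^ 2 := by field_simp
    rw [e] at h1
    have e2 : 2 * (q / g) * q ^ 2 = 2 * q * (q ^ 2 / g) := by field_simp
    have h2 : q ^ 2 / g + g - 2 * q = (q - g) ^ 2 / g := by field_simp; ring
    have h3 : 0 ≤ (q - g) ^ 2 / g := by positivity
    have h4 : q ^ 2 / g - q / 2 ≤ 1 / (2 * q) * a := by
      rw [one_div, inv_mul_eq_div, le_div_iff₀ (by positivity)]
      nlinarith
    linarith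

lemma aux_fubini (u v : ℝ → ℝ≥0∞) (hu : Measurable u) (hv : Measurable v) :
    ∫⁻ x in Set.Ioo (0:ℝ) 1, v x * ∫⁻ t in Set.Ioo (0:ℝ) x, u t
      = ∫⁻ t in Set.Ioo (0:ℝ) 1, u t * ∫⁻ x in Set.Ioo t 1, v x := by
  have e1 : ∀ x ∈ Set.Ioo (0:ℝ) 1, v x * ∫⁻ t in Set.Ioo (0:ℝ) x, u t
      = ∫⁻ t in Set.Ioo (0:ℝ) 1, {p : ℝ × ℝ | p.2 < p.1}.indicator (fun p => v p.1 * u p.2) (x, t) := by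
    intro x hx
    rw [← lintegral_const_mul _ hu, ← lintegral_indicator measurableSet_Ioo,
      ← lintegral_indicator measurableSet_Ioo]
    congr 1; ext t
    simp only [Set.indicator, Set.mem_Ioo, Set.mem_ofPred_eq]
    have := hx.1; have := hx.2
    split_ifs <;> first | rfl | (exfalso; grind)
  have e2 : ∀ t ∈ Set.Ioo (0:ℝ) 1, u t * ∫⁻ x in Set.Ioo t 1, v x
      = ∫⁻ x in Set.Ioo (0:ℝ) 1, {p : ℝ × ℝ | p.2 < p.1}.indicator (fun p => v p.1 * u p.2) (x, t) := by
    intro t ht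
    rw [← lintegral_const_mul _ hv, ← lintegral_indicator measurableSet_Ioo,
      ← lintegral_indicator measurableSet_Ioo]
    congr 1; ext x
    simp only [Set.indicator, Set.mem_Ioo, Set.mem_ofPred_eq]
    have := ht.1; have := ht.2
    split_ifs <;> first | rfl | exact mul_comm _ _ | (exfalso; grind)
  rw [setLIntegral_congr_fun measurableSet_Ioo e1, setLIntegral_congr_fun measurableSet_Ioo e2]
  rw [lintegral_lintegral_swap]
  apply Measurable.aemeasurable
  apply Measurable.indicator
  · exact (hv.comp measurable_fst).mul (hu.comp measurable_snd)
  · exact measurableSet_lt measurable_snd measurable_fst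



/-- For `ρ*(t) = 1 + 2cos((1/3)arccos(2t-1) + 4π/3)` one has
`∫_0^1 (∫_0^x 1/ρ*(t) dt)^{1/2} dx = (1/2)(3/2)^{1/2}`; in particular `ρ*`
attains the minimal value of `J(ρ) = ∫_0^1 (∫_0^x 1/ρ)^{p/2} dx` with `p = 1`
over all probability densities on `[0,1]`. -/
theorem optimal_density_p_one_attains_min
    (ρstar : ℝ → ℝ)
    (hρ : ∀ t, ρstar t = 1 + 2 * Real.cos ((1 / 3) * Real.arccos (2 * t - 1)
        + 4 * Real.pi / 3)) :
    (∫⁻ x in Set.Icc (0 : ℝ) 1,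
        (∫⁻ t in Set.Ico (0 : ℝ) x, 1 / ENNReal.ofReal (ρstar t)) ^ ((1 : ℝ) / 2))
      = ENNReal.ofReal ((1 / 2) * Real.sqrt (3 / 2)) ∧
    (∀ ρ : ℝ → ℝ≥0∞, Measurable ρ →
        (∫⁻ t in Set.Icc (0 : ℝ) 1, ρ t) = 1 →
        (∫⁻ x in Set.Icc (0 : ℝ) 1,
            (∫⁻ t in Set.Ico (0 : ℝ) x, 1 / ENNReal.ofReal (ρstar t)) ^ ((1 : ℝ) / 2))
          ≤ ∫⁻ x in Set.Icc (0 : ℝ) 1,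
              (∫⁻ t in Set.Ico (0 : ℝ) x, 1 / ρ t) ^ ((1 : ℝ) / 2)) := by
  have hcont : Continuous ρstar := by
    rw [funext hρ]; have := Real.continuous_arccos; fun_prop
  have hrange : ∀ t ∈ Set.Ioo (0:ℝ) 1, 0 < ρstar t ∧ ρstar t < 2 :=
    fun t ht => aux_range t ht _ (hρ t)
  have hder := aux_deriv ρstar hρ
  have hz : ρstar 0 = 2 := aux_zero _ (hρ 0)
  have ho : ρstar 1 = 0 := aux_one _ (hρ 1)
  simp only [setLIntegral_congr (Ioo_ae_eq_Icc (α := ℝ) (μ := volume)).symm,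
    setLIntegral_congr (Ioo_ae_eq_Ico (α := ℝ) (μ := volume)).symm]
  obtain ⟨c, hc⟩ : ∃ c, c = (1 / 2) * Real.sqrt (3 / 2) := ⟨_, rfl⟩
  have hc0 : 0 < c := by rw [hc]; positivity
  have hc2 : c ^ 2 = 3 / 8 := by
    rw [hc, mul_pow, Real.sq_sqrt (by norm_num)]; norm_num
  rw [← hc]
  have hWr : ∀ x ∈ Set.Ioo (0:ℝ) 1,
      ∫⁻ t in Set.Ioo (0:ℝ) x, ENNReal.ofReal (1 / ρstar t)
        = ENNReal.ofReal ((c * (2 - ρstar x)) ^ 2) := by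
    intro x hx
    rw [aux_ftc (fun t => (c * (2 - ρstar t)) ^ 2) (fun t => 1 / ρstar t) 0 x hx.1.le
      (by fun_prop)]
    · simp [hz]
    · intro t ht
      have ht' : t ∈ Set.Ioo (0:ℝ) 1 := ⟨ht.1, ht.2.trans hx.2⟩
      obtain ⟨p0, p2⟩ := hrange t ht'
      have p3 : 0 < 2 - ρstar t := by linarith
      refine HasDerivAt.congr_deriv ((((hder t ht').const_sub 2).const_mul c).pow 2) ?_
      field_simp
      norm_num
      linear_combination (8 * (2 - ρstar t)) * hc2
    · intro t ht
      exact (one_div_pos.2 (hrange t ⟨ht.1, ht.2.trans hx.2⟩).1).le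
  have hW : ∀ x ∈ Set.Ioo (0:ℝ) 1,
      (∫⁻ t in Set.Ioo (0:ℝ) x, 1 / ENNReal.ofReal (ρstar t)) ^ ((1:ℝ)/2)
        = ENNReal.ofReal (c * (2 - ρstar x)) := by
    intro x hx
    have e : ∫⁻ t in Set.Ioo (0:ℝ) x, 1 / ENNReal.ofReal (ρstar t)
        = ∫⁻ t in Set.Ioo (0:ℝ) x, ENNReal.ofReal (1 / ρstar t) := by
      apply setLIntegral_congr_fun measurableSet_Ioo
      intro t ht
      simp only
      rw [ENNReal.ofReal_div_of_pos (hrange t ⟨ht.1, ht.2.trans hx.2⟩).1, ENNReal.ofReal_one]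
    have p3 : 0 < 2 - ρstar x := by linarith [(hrange x hx).2]
    rw [e, hWr x hx, ENNReal.ofReal_rpow_of_nonneg (by positivity) (by norm_num),
      ← Real.sqrt_eq_rpow, Real.sqrt_sq (by positivity)]
  have hI : ∀ k : ℝ, 0 ≤ k → ∫⁻ x in Set.Ioo (0:ℝ) 1, ENNReal.ofReal (k * (2 - ρstar x))
      = ENNReal.ofReal k := by
    intro k hk
    rw [aux_ftc (fun t => k * (-(3/4) * (2 * ρstar t ^ 2 - 4 / 3 * ρstar t ^ 3 + ρstar t ^ 4 / 4)))
      (fun x => k * (2 - ρstar x)) 0 1 (by norm_num) (by fun_prop)]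
    · simp only [hz, ho]; congr 1; ring
    · intro t ht
      obtain ⟨p0, p2⟩ := hrange t ht
      have p3 : 2 - ρstar t ≠ 0 := (show 0 < 2 - ρstar t by linarith).ne'
      have h := hder t ht
      refine HasDerivAt.congr_deriv ((((((h.pow 2).const_mul 2).sub ((h.pow 3).const_mul (4/3))).add
        ((h.pow 4).div_const 4)).const_mul (-(3/4))).const_mul k) ?_
      field_simp
      norm_num
      ring
    · intro t ht
      exact mul_nonneg hk (by linarith [(hrange t ht).2])
  have hJ : (∫⁻ x in Set.Ioo (0:ℝ) 1,
      (∫⁻ t in Set.Ioo (0:ℝ) x, 1 / ENNReal.ofReal (ρstar t)) ^ ((1:ℝ)/2)) = ENNReal.ofReal c := by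
    rw [setLIntegral_congr_fun measurableSet_Ioo hW, hI c hc0.le]
  refine ⟨hJ, fun ρ hm h1 => ?_⟩
  rw [hJ]
  have hV : ∀ t ∈ Set.Ioo (0:ℝ) 1,
      ∫⁻ x in Set.Ioo t 1, ENNReal.ofReal (1 / (2 * (c * (2 - ρstar x))))
        = ENNReal.ofReal (c / 2 * ρstar t ^ 2) := by
    intro t ht
    rw [aux_ftc (fun t => -(c / 2 * ρstar t ^ 2))
      (fun x => 1 / (2 * (c * (2 - ρstar x)))) t 1 ht.2.le (by fun_prop)]
    · simp [ho]
    · intro s hs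
      have hs' : s ∈ Set.Ioo (0:ℝ) 1 := ⟨ht.1.trans hs.1, hs.2⟩
      obtain ⟨p0, p2⟩ := hrange s hs'
      have p3 : 2 - ρstar s ≠ 0 := (show 0 < 2 - ρstar s by linarith).ne'
      refine HasDerivAt.congr_deriv ((((hder s hs').pow 2).const_mul (c/2)).neg) ?_
      field_simp
      norm_num
      linear_combination (8 * ρstar s) * hc2
    · intro s hs
      have p3 : 0 < 2 - ρstar s := by linarith [(hrange s ⟨ht.1.trans hs.1, hs.2⟩).2]
      positivity
  have hmr : Measurable ρstar := hcont.measurable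
  have key : ∀ x ∈ Set.Ioo (0:ℝ) 1, ENNReal.ofReal (3 / 2 * c * (2 - ρstar x)) ≤
      (∫⁻ t in Set.Ioo (0:ℝ) x, 1 / ρ t) ^ ((1:ℝ)/2) +
      ENNReal.ofReal (1 / (2 * (c * (2 - ρstar x)))) *
        ∫⁻ t in Set.Ioo (0:ℝ) x, ENNReal.ofReal ((1 / ρstar t) ^ 2) * ρ t := by
    intro x hx
    have p3 : 0 < 2 - ρstar x := by linarith [(hrange x hx).2]
    rw [mul_assoc]
    apply aux_pt_s10 _ _ _ (by positivity)
    intro μ hμ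
    have hm2 : Measurable fun t => 1 / ρ t := by fun_prop
    rw [ENNReal.ofReal_mul (by positivity), ← hWr x hx,
      ← lintegral_const_mul _ (by fun_prop), ← lintegral_const_mul _ hm2,
      ← lintegral_add_left (by fun_prop)]
    apply setLIntegral_mono' measurableSet_Ioo
    intro t ht
    rw [← ENNReal.ofReal_mul (by positivity)]
    exact aux_amgm _ _ _ (one_div_pos.2 (hrange t ⟨ht.1, ht.2.trans hx.2⟩).1) hμ
  have hint := setLIntegral_mono' (μ := volume) measurableSet_Ioo key
  have hswap := aux_fubini (fun t => ENNReal.ofReal ((1 / ρstar t) ^ 2) * ρ t)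
    (fun x => ENNReal.ofReal (1 / (2 * (c * (2 - ρstar x))))) (by fun_prop) (by fun_prop)
  have e3 : ∫⁻ t in Set.Ioo (0:ℝ) 1, (ENNReal.ofReal ((1 / ρstar t) ^ 2) * ρ t) *
      ∫⁻ x in Set.Ioo t 1, ENNReal.ofReal (1 / (2 * (c * (2 - ρstar x))))
      = ENNReal.ofReal (c / 2) := by
    have e4 : ∀ t ∈ Set.Ioo (0:ℝ) 1, (ENNReal.ofReal ((1 / ρstar t) ^ 2) * ρ t) *
      ∫⁻ x in Set.Ioo t 1, ENNReal.ofReal (1 / (2 * (c * (2 - ρstar x))))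
        = ENNReal.ofReal (c / 2) * ρ t := by
      intro t ht
      have p0 := (hrange t ht).1
      rw [hV t ht, mul_right_comm, ← ENNReal.ofReal_mul (by positivity)]
      congr 2
      field_simp
    rw [setLIntegral_congr_fun measurableSet_Ioo e4, lintegral_const_mul _ hm]
    rw [h1, mul_one]
  rw [hI _ (by positivity), lintegral_add_right', hswap, e3] at hint
  · have e5 : ENNReal.ofReal (3 / 2 * c) = ENNReal.ofReal c + ENNReal.ofReal (c / 2) := by
      rw [← ENNReal.ofReal_add hc0.le (by positivity)]; congr 1; ring
    rw [e5] at hint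
    exact (ENNReal.add_le_add_iff_right ENNReal.ofReal_ne_top).1 hint
  · apply AEMeasurable.mul
    · fun_prop
    · apply Measurable.aemeasurable
      apply Monotone.measurable
      intro x y hxy
      exact lintegral_mono_set (Set.Ioo_subset_Ioo_right hxy)
end
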